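/- arXiv:2309.00963 — 2 statements merged into one kernel-verified Lean document; each statement's English description precedes it below -/
import Mathlib

section
/- Let ℓ ∈ ℤ, let V : ℝ → ℝ be a continuous bounded function with V ≥ 1, and let ω ⊂ [ℓ, ℓ+1] be a measurable set with |ω| > 0. Then there exist constants α ∈ (0,1) and C > 0, depending only on V and |ω|, such that every real-valued H²_loc solution φ of −Δφ(x,y) + V(x)φ(x,y) = 0 with ∂_yφ(x,0) = 0 satisfies ‖φ‖_{L²(D₁ℓ)} ≤ C ‖φ(·,0)‖_{L²(ω)}^α (sup_{D₂ℓ}|φ|)^{1−α}, where D₁ℓ = [ℓ, ℓ+1] × [−1/2, 1/2] and D₂ℓ = [ℓ−1, ℓ+2] × [−3/2, 3/2]. -/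
open MeasureTheory Set

/-- separated points in a set of large measure -/
lemma exists_separated_points (n : ℕ) (d : ℝ) (hd : 0 < d) :
    ∀ E : Set ℝ, BddBelow E → ENNReal.ofReal (n * d) < volume E →
      ∃ x : ℕ → ℝ, (∀ i ≤ n, x i ∈ E) ∧ ∀ i j, i ≤ j → j ≤ n → ((j : ℝ) - i) * d ≤ x j - x i := by
  induction n with
  | zero =>
    intro E _ hE
    have : E.Nonempty := by
      rw [Set.nonempty_iff_ne_empty]; rintro rfl; simp at hE
    obtain ⟨a, ha⟩ := this
    refine ⟨fun _ => a, fun _ _ => ha, ?_⟩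
    intro i j hij hj
    have : j = 0 := by omega
    have : i = 0 := by omega
    subst_vars; simp
  | succ n ih =>
    intro E hb hE
    have hne : E.Nonempty := by
      rw [Set.nonempty_iff_ne_empty]; rintro rfl; simp at hE
    obtain ⟨e, he0, he⟩ : ∃ e : ℝ, 0 < e ∧ ENNReal.ofReal ((n + 1 : ℕ) * d + e) < volume E := by
      obtain ⟨c, hc1, hc2⟩ := exists_between hE
      have hct : c ≠ ⊤ := ne_top_of_lt hc2
      have h3 : ((n + 1 : ℕ) * d : ℝ) < c.toReal := by
        rw [← ENNReal.ofReal_lt_ofReal_iff_of_nonneg (by positivity), ENNReal.ofReal_toReal hct]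
        exact hc1
      refine ⟨c.toReal - (n + 1 : ℕ) * d, by linarith, ?_⟩
      rw [add_sub_cancel, ENNReal.ofReal_toReal hct]
      exact hc2
    obtain ⟨x0, hx0, hx0'⟩ : ∃ x0 ∈ E, x0 < sInf E + e := exists_lt_of_csInf_lt hne (by linarith)
    have hlt : ENNReal.ofReal (n * d) < volume (E ∩ Ici (x0 + d)) := by
      by_contra hcon
      push Not at hcon
      have h1 : E ⊆ (E ∩ Ici (x0 + d)) ∪ Ico (sInf E) (x0 + d) := by
        intro y hy
        by_cases h : x0 + d ≤ y
        · exact Or.inl ⟨hy, h⟩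
        · exact Or.inr ⟨csInf_le hb hy, by linarith⟩
      have h2 : volume E ≤ ENNReal.ofReal (n * d) + ENNReal.ofReal (x0 + d - sInf E) := by
        refine (measure_mono h1).trans ((measure_union_le _ _).trans ?_)
        rw [Real.volume_Ico]
        gcongr
      have h4 : sInf E ≤ x0 := csInf_le hb hx0
      rw [← ENNReal.ofReal_add (by positivity) (by linarith)] at h2
      have h3 := lt_of_lt_of_le he h2
      rw [ENNReal.ofReal_lt_ofReal_iff_of_nonneg (by positivity)] at h3
      push_cast at h3
      linarith
    obtain ⟨x, hx1, hx2⟩ := ih _ (hb.mono inter_subset_left) hlt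
    refine ⟨fun k => Nat.casesOn k x0 x, ?_, ?_⟩
    · intro i hi
      cases i with
      | zero => exact hx0
      | succ i => exact (hx1 i (by omega)).1
    · intro i j hij hj
      cases j with
      | zero =>
        have : i = 0 := by omega
        subst this; simp
      | succ j =>
        cases i with
        | zero =>
          have h1 := hx2 0 j (by omega) (by omega)
          have h2 : x0 + d ≤ x 0 := (hx1 0 (by omega)).2
          change (((j + 1 : ℕ) : ℝ) - ((0 : ℕ) : ℝ)) * d ≤ x j - x0
          push_cast at h1 ⊢
          linarith
        | succ i =>
          have h1 := hx2 i j (by omega) (by omega)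
          simp only
          push_cast
          linarith

lemma prod_erase_abs (n i : ℕ) (hi : i ≤ n) :
    ∏ j ∈ (Finset.range (n+1)).erase i, |(i : ℝ) - j| = (i.factorial : ℝ) * (n - i).factorial := by
  have h : (Finset.range (n+1)).erase i = Finset.range i ∪ Finset.Ico (i+1) (n+1) := by
    ext j; simp; omega
  rw [h, Finset.prod_union]
  · congr 1
    · rw [← Finset.prod_range_reflect, ← Finset.prod_range_add_one_eq_factorial]
      push_cast
      refine Finset.prod_congr rfl fun j hj => ?_
      rw [Finset.mem_range] at hj
      have : ((i - 1 - j : ℕ) : ℝ) = i - 1 - j := by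
        rw [Nat.cast_sub (by omega), Nat.cast_sub (by omega)]; simp
      rw [this, show (i : ℝ) - (i - 1 - j) = j + 1 by ring, abs_of_nonneg (by positivity)]
    · rw [Finset.prod_Ico_eq_prod_range, ← Finset.prod_range_add_one_eq_factorial]
      have : n + 1 - (i + 1) = n - i := by omega
      rw [this]
      push_cast
      refine Finset.prod_congr rfl fun j hj => ?_
      rw [abs_sub_comm, abs_of_nonneg]
      · ring
      · have : (0:ℝ) ≤ j := by positivity
        linarith
  · rw [Finset.disjoint_left]; intro j; simp; omega

lemma exists_factor (U : Set ℂ) (hU : IsOpen U) (s : Finset ℂ) :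
    ∀ K : ℂ → ℂ, DifferentiableOn ℂ K U → (∀ x ∈ s, x ∈ U) → (∀ x ∈ s, K x = 0) →
      ∃ H : ℂ → ℂ, DifferentiableOn ℂ H U ∧ ∀ z ∈ U, K z = H z * ∏ x ∈ s, (z - x) := by
  induction s using Finset.induction_on with
  | empty => intro K hK _ _; exact ⟨K, hK, by simp⟩
  | insert a s ha ih =>
    intro K hK hs h0
    obtain ⟨H, hH, hKH⟩ := ih K hK (fun x hx => hs x (Finset.mem_insert_of_mem hx))
      (fun x hx => h0 x (Finset.mem_insert_of_mem hx))
    have haU := hs a (Finset.mem_insert_self _ _)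
    have hHa : H a = 0 := by
      have h1 := hKH a haU
      rw [h0 a (Finset.mem_insert_self _ _)] at h1
      rcases mul_eq_zero.1 h1.symm with h | h
      · exact h
      · obtain ⟨x, hx, hx2⟩ := Finset.prod_eq_zero_iff.1 h
        exact absurd (sub_eq_zero.1 hx2 ▸ hx) ha
    refine ⟨dslope H a, (Complex.differentiableOn_dslope (hU.mem_nhds haU)).2 hH, ?_⟩
    intro z hz
    rw [Finset.prod_insert ha, hKH z hz]
    have := sub_smul_dslope H a z
    rw [hHa, sub_zero, smul_eq_mul] at this
    rw [← this]; ring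

/-- interpolation estimate on a disc -/
lemma disc_estimate (μ : ℝ) (hμ : 0 < μ) (U : Set ℂ) (hU : IsOpen U) (c : ℝ)
    (hcU : Metric.closedBall (c : ℂ) (5/16) ⊆ U) (E : Set ℝ) (hE : E ⊆ Icc (c - 1/16) (c + 1/16))
    (hEμ : ENNReal.ofReal μ ≤ volume E) (G : ℂ → ℂ) (hG : DifferentiableOn ℂ G U)
    (S δ : ℝ) (hδ0 : 0 ≤ δ) (hS : ∀ z ∈ U, ‖G z‖ ≤ S) (hδ : ∀ x ∈ E, ‖G (x : ℂ)‖ ≤ δ)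
    (n : ℕ) (z : ℂ) (hz : z ∈ Metric.closedBall (c : ℂ) (1/16)) :
    ‖G z‖ ≤ (2 * Real.exp 1) * (δ * (2 * Real.exp 1 / μ) ^ n + S * (1/2) ^ n) := by
  have hd : 0 < μ / (n+1) := by positivity
  obtain ⟨x, hxE, hx⟩ := exists_separated_points n (μ / (n+1)) hd E
    (bddBelow_Icc.mono hE) (lt_of_lt_of_le (by
      rw [ENNReal.ofReal_lt_ofReal_iff hμ, mul_div_assoc', div_lt_iff₀ (by positivity)]
      nlinarith) hEμ)
  have hsep : ∀ i ≤ n, ∀ j ≤ n, |(i:ℝ) - j| * (μ / (n+1)) ≤ ‖(x i : ℂ) - x j‖ := by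
    intro i hi j hj
    rw [← Complex.ofReal_sub, Complex.norm_real, Real.norm_eq_abs]
    rcases le_total i j with h | h
    · have h1 := hx i j h hj
      have : (i:ℝ) ≤ j := by exact_mod_cast h
      rw [abs_sub_comm, abs_sub_comm (x i), abs_of_nonneg (by linarith)]
      exact h1.trans (le_abs_self _)
    · have h1 := hx j i h hi
      have : (j:ℝ) ≤ i := by exact_mod_cast h
      rw [abs_of_nonneg (by linarith)]
      exact h1.trans (le_abs_self _)
  set v : ℕ → ℂ := fun i => (x i : ℂ) with hv
  have hinj : Set.InjOn v (Finset.range (n+1)) := by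
    intro i hi j hj hij
    simp at hi hj
    by_contra hne
    have h1 := hsep i (by omega) j (by omega)
    have h2 : (x i : ℂ) = x j := hij
    rw [h2, sub_self, norm_zero] at h1
    have h3 : (0:ℝ) < |(i:ℝ) - j| := abs_pos.2 (sub_ne_zero.2 (by exact_mod_cast hne))
    nlinarith [mul_pos h3 hd]
  have hxc : ∀ i ≤ n, ‖v i - c‖ ≤ 1/16 := by
    intro i hi
    have := hE (hxE i hi)
    simp only [hv]
    rw [← Complex.ofReal_sub, Complex.norm_real, Real.norm_eq_abs, abs_le]
    constructor <;> linarith [this.1, this.2]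
  set P : Polynomial ℂ := Lagrange.interpolate (Finset.range (n+1)) v (fun i => G (v i)) with hP
  -- bound on P
  have hPb : ∀ w ∈ Metric.closedBall (c : ℂ) (5/16),
      ‖P.eval w‖ ≤ δ * (Real.exp 1 * (2 * Real.exp 1 / μ) ^ n) := by
    intro w hw
    rw [mem_closedBall_iff_norm] at hw
    have hbasis : ∀ i ∈ Finset.range (n+1), ‖(Lagrange.basis (Finset.range (n+1)) v i).eval w‖
        ≤ (n.choose i : ℝ) * (((n+1) / μ)^n / n.factorial) := by
      intro i hi
      have hi' : i ≤ n := by simp at hi; omega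
      rw [Lagrange.basis, Polynomial.eval_prod, norm_prod]
      have h1 : ∀ j ∈ (Finset.range (n+1)).erase i,
          ‖(Lagrange.basisDivisor (v i) (v j)).eval w‖ ≤ ((n+1)/μ) * |(i:ℝ) - j|⁻¹ := by
        intro j hj
        simp at hj
        have hj' : j ≤ n := by omega
        rw [Lagrange.basisDivisor]
        simp only [Polynomial.eval_mul, Polynomial.eval_C, Polynomial.eval_sub, Polynomial.eval_X,
          norm_mul, norm_inv]
        have h3 : (0:ℝ) < |(i:ℝ) - j| :=
          abs_pos.2 (sub_ne_zero.2 (by exact_mod_cast (Ne.symm hj.1)))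
        have h4 : ‖w - v j‖ ≤ 1 := by
          have : w - v j = (w - c) - (v j - c) := by ring
          rw [this]
          refine (norm_sub_le _ _).trans ?_
          linarith [hxc j hj']
        have h5 : ‖v i - v j‖⁻¹ ≤ (|(i:ℝ) - j| * (μ / (n+1)))⁻¹ := by
          gcongr
          exact hsep i hi' j hj'
        calc ‖v i - v j‖⁻¹ * ‖w - v j‖ ≤ (|(i:ℝ) - j| * (μ / (n+1)))⁻¹ * 1 := by gcongr
          _ = _ := by rw [mul_one, mul_inv, inv_div, mul_comm]
      refine (Finset.prod_le_prod (fun _ _ => norm_nonneg _) h1).trans (le_of_eq ?_)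
      rw [Finset.prod_mul_distrib, Finset.prod_const, Finset.card_erase_of_mem hi,
        Finset.card_range, Finset.prod_inv_distrib, prod_erase_abs n i hi',
        Nat.cast_choose ℝ hi']
      simp only [Nat.add_sub_cancel]
      have := Nat.factorial_pos n
      have h6 : (n.factorial : ℝ) ≠ 0 := by positivity
      field_simp
    rw [hP, Lagrange.interpolate_apply, Polynomial.eval_finsetSum]
    refine (norm_sum_le _ _).trans ?_
    have h2 : ∀ i ∈ Finset.range (n+1), ‖(Polynomial.C (G (v i)) *
        Lagrange.basis (Finset.range (n+1)) v i).eval w‖ ≤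
        δ * ((n.choose i : ℝ) * (((n+1) / μ)^n / n.factorial)) := by
      intro i hi
      rw [Polynomial.eval_mul, Polynomial.eval_C, norm_mul]
      have hi' : i ≤ n := by simp at hi; omega
      gcongr
      · exact hδ _ (hxE i hi')
      · exact hbasis i hi
    refine (Finset.sum_le_sum h2).trans ?_
    rw [← Finset.mul_sum, ← Finset.sum_mul]
    refine mul_le_mul_of_nonneg_left ?_ hδ0
    have h3 : (∑ i ∈ Finset.range (n+1), (n.choose i : ℝ)) = 2 ^ n := by
      exact_mod_cast Nat.sum_range_choose n
    rw [h3]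
    have h4 := Real.pow_div_factorial_le_exp (x := (n:ℝ)+1) (by positivity) n
    have h5 : Real.exp ((n:ℝ)+1) = Real.exp 1 * Real.exp 1 ^ n := by
      rw [Real.exp_add, ← Real.exp_nat_mul, mul_one, mul_comm]
    calc (2:ℝ) ^ n * (((n+1) / μ)^n / n.factorial)
        = (2 / μ) ^ n * (((n:ℝ)+1)^n / n.factorial) := by rw [div_pow, div_pow]; ring
      _ ≤ (2 / μ) ^ n * (Real.exp 1 * Real.exp 1 ^ n) := by rw [← h5]; gcongr
      _ = Real.exp 1 * (2 * Real.exp 1 / μ) ^ n := by rw [div_pow, div_pow, mul_pow]; ring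
  set Q := δ * (Real.exp 1 * (2 * Real.exp 1 / μ) ^ n) with hQ
  have hQ0 : 0 ≤ Q := by positivity
  have hS0 : 0 ≤ S := (norm_nonneg _).trans (hS c (hcU (Metric.mem_closedBall_self (by norm_num))))
  obtain ⟨H, hH, hKH⟩ := exists_factor U hU ((Finset.range (n+1)).image v) (fun w => G w - P.eval w)
    (hG.sub (P.differentiable.differentiableOn)) (by
      intro y hy
      simp only [Finset.mem_image, Finset.mem_range] at hy
      obtain ⟨i, hi, rfl⟩ := hy
      apply hcU
      rw [mem_closedBall_iff_norm]
      linarith [hxc i (by omega)]) (by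
      intro y hy
      simp only [Finset.mem_image] at hy
      obtain ⟨i, hi, rfl⟩ := hy
      simp only [hP]
      rw [Lagrange.eval_interpolate_at_node _ hinj hi, sub_self])
  have hKH' : ∀ w ∈ U, G w - P.eval w = H w * ∏ i ∈ Finset.range (n+1), (w - v i) := by
    intro w hw
    rw [hKH w hw, Finset.prod_image hinj]
  have hzb : z ∈ Metric.closedBall (c:ℂ) (5/16) := Metric.closedBall_subset_closedBall (by norm_num) hz
  have hHb : ‖H z‖ ≤ (S + Q) / (1/4)^(n+1) := by
    refine Complex.norm_le_of_forall_mem_frontier_norm_le (U := Metric.ball (c:ℂ) (5/16))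
      Metric.isBounded_ball ?_ ?_ ?_
    · refine (hH.mono hcU).diffContOnCl_ball subset_rfl
    · intro w hw
      rw [frontier_ball _ (by norm_num), mem_sphere_iff_norm] at hw
      have hwb : w ∈ Metric.closedBall (c:ℂ) (5/16) := mem_closedBall_iff_norm.2 hw.le
      have h1 : (1/4:ℝ)^(n+1) ≤ ‖∏ i ∈ Finset.range (n+1), (w - v i)‖ := by
        rw [norm_prod]
        have : (1/4:ℝ)^(n+1) = ∏ i ∈ Finset.range (n+1), (1/4:ℝ) := by simp
        rw [this]
        refine Finset.prod_le_prod (fun _ _ => by norm_num) ?_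
        intro i hi
        have hi' : i ≤ n := by simp at hi; omega
        have h2 := norm_sub_norm_le (w - c) (v i - c)
        have h3 : (w - c) - (v i - c) = w - v i := by ring
        rw [h3] at h2
        linarith [hxc i hi']
      rw [le_div_iff₀ (by positivity)]
      calc ‖H w‖ * (1/4)^(n+1) ≤ ‖H w‖ * ‖∏ i ∈ Finset.range (n+1), (w - v i)‖ := by gcongr
        _ = ‖G w - P.eval w‖ := by rw [hKH' w (hcU hwb), norm_mul]
        _ ≤ ‖G w‖ + ‖P.eval w‖ := norm_sub_le _ _
        _ ≤ S + Q := add_le_add (hS w (hcU hwb)) (hPb w hwb)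
    · rw [closure_ball _ (by norm_num)]
      exact hzb
  have hfin : ‖G z - P.eval z‖ ≤ (S + Q) * (1/2)^(n+1) := by
    rw [hKH' z (hcU hzb), norm_mul]
    have h1 : ‖∏ i ∈ Finset.range (n+1), (z - v i)‖ ≤ (1/8:ℝ)^(n+1) := by
      rw [norm_prod]
      have : (1/8:ℝ)^(n+1) = ∏ i ∈ Finset.range (n+1), (1/8:ℝ) := by simp
      rw [this]
      refine Finset.prod_le_prod (fun _ _ => norm_nonneg _) ?_
      intro i hi
      have hi' : i ≤ n := by simp at hi; omega
      have h3 : z - v i = (z - c) - (v i - c) := by ring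
      rw [h3]
      refine (norm_sub_le _ _).trans ?_
      rw [mem_closedBall_iff_norm] at hz
      linarith [hxc i hi']
    calc _ ≤ ((S + Q) / (1/4)^(n+1)) * (1/8:ℝ)^(n+1) := by gcongr
      _ = (S + Q) * (1/2)^(n+1) := by
        rw [show (1/8:ℝ) = (1/4) * (1/2) by norm_num, mul_pow]
        field_simp
  have h1 : ‖G z‖ ≤ (S + Q) * (1/2)^(n+1) + Q := by
    have : G z = (G z - P.eval z) + P.eval z := by ring
    rw [this]
    exact (norm_add_le _ _).trans (add_le_add hfin (hPb z hzb))
  have h2 : (1/2:ℝ)^(n+1) ≤ 1 := pow_le_one₀ (by norm_num) (by norm_num)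
  have h3 : (1:ℝ) ≤ Real.exp 1 := Real.one_le_exp (by norm_num)
  have h4 : S * (1/2)^(n+1) ≤ 2 * Real.exp 1 * (S * (1/2)^n) := by
    rw [pow_succ]
    have : 0 ≤ S * (1/2)^n := by positivity
    nlinarith
  have h5 : Q * (1/2)^(n+1) ≤ Q := by nlinarith
  have h6 : 2 * Q = 2 * Real.exp 1 * (δ * (2 * Real.exp 1 / μ) ^ n) := by rw [hQ]; ring
  linarith

/-- Taylor doubling step -/
lemma doubling_step (c : ℂ) (r : ℝ) (hr : 0 < r) (U : Set ℂ) (G : ℂ → ℂ)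
    (hG : DifferentiableOn ℂ G U) (hcU : Metric.closedBall c (4 * r) ⊆ U) (X S : ℝ)
    (hX : ∀ z ∈ Metric.closedBall c r, ‖G z‖ ≤ X) (hS : ∀ z ∈ U, ‖G z‖ ≤ S) (k : ℕ) (z : ℂ)
    (hz : z ∈ Metric.closedBall c (2 * r)) : ‖G z‖ ≤ X * 2 ^ k + 2 * S * (1/2)^k := by
  have hX0 : 0 ≤ X := (norm_nonneg _).trans (hX c (Metric.mem_closedBall_self hr.le))
  have hS0 : 0 ≤ S := (norm_nonneg _).trans (hS c (hcU (Metric.mem_closedBall_self (by positivity))))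
  have hd4 : DifferentiableOn ℂ G (Metric.ball c (4*r)) := hG.mono (Metric.ball_subset_closedBall.trans hcU)
  have hz4 : z ∈ Metric.ball c (4*r) := by
    rw [mem_closedBall_iff_norm] at hz; rw [mem_ball_iff_norm]; linarith
  have hsum := Complex.hasSum_taylorSeries_on_ball hd4 hz4
  rw [mem_closedBall_iff_norm] at hz
  have hb : ∀ (ρ B : ℝ), 0 < ρ → ρ ≤ 4 * r → (∀ w ∈ Metric.closedBall c ρ, ‖G w‖ ≤ B) → ∀ j : ℕ,
      ‖(j.factorial : ℂ)⁻¹ • (z - c)^j • iteratedDeriv j G c‖ ≤ B * (2 * r / ρ)^j := by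
    intro ρ B hρ hρ4 hB j
    have h1 := Complex.norm_iteratedDeriv_le_of_forall_mem_sphere_norm_le (f := G) (c := c) j hρ
      (C := B) ((hG.mono ((Metric.closedBall_subset_closedBall hρ4).trans hcU)).diffContOnCl_ball subset_rfl)
      (fun w hw => hB w (Metric.sphere_subset_closedBall hw))
    rw [norm_smul, norm_smul, norm_inv, norm_pow, Complex.norm_natCast]
    have h6 : (0:ℝ) < j.factorial := by exact_mod_cast Nat.factorial_pos j
    have hB0 : 0 ≤ B := (norm_nonneg _).trans (hB c (Metric.mem_closedBall_self hρ.le))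
    calc (j.factorial:ℝ)⁻¹ * (‖z - c‖^j * ‖iteratedDeriv j G c‖)
        ≤ (j.factorial:ℝ)⁻¹ * ((2*r)^j * (j.factorial * B / ρ^j)) := by gcongr
      _ = _ := by rw [div_pow]; field_simp
  have hb1 := hb r X hr (by linarith) hX
  have hb2 := hb (4*r) S (by positivity) le_rfl (fun w hw => hS w (hcU hw))
  have e1 : 2 * r / r = 2 := by field_simp
  have e2 : 2 * r / (4 * r) = 1/2 := by field_simp; norm_num
  rw [e1] at hb1; rw [e2] at hb2
  rw [← hsum.tsum_eq, ← hsum.summable.sum_add_tsum_nat_add k]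
  refine (norm_add_le _ _).trans (add_le_add ?_ ?_)
  · refine (norm_sum_le _ _).trans ((Finset.sum_le_sum (fun j _ => hb1 j)).trans ?_)
    rw [← Finset.mul_sum]
    gcongr
    have : ∀ k : ℕ, ∑ i ∈ Finset.range k, (2:ℝ)^i ≤ 2^k := by
      intro k
      induction k with
      | zero => simp
      | succ k ih => rw [Finset.sum_range_succ, pow_succ]; linarith
    exact this k
  · have hg : HasSum (fun j : ℕ => (S * (1/2)^k) * (1/2:ℝ)^j) ((S * (1/2)^k) * 2) :=
      hasSum_geometric_two.mul_left _
    refine (tsum_of_norm_bounded hg ?_).trans (le_of_eq (by ring))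
    intro j
    refine (hb2 (j+k)).trans (le_of_eq (by rw [pow_add]; ring))

/-- the open rectangle around `D₁` -/
def rectU : Set ℂ := (Ioo (-1/2 : ℝ) (3/2)) ×ℂ (Ioo (-1 : ℝ) 1)

lemma isOpen_rectU : IsOpen rectU := isOpen_Ioo.reProdIm isOpen_Ioo

lemma ball_subset_rectU (z : ℂ) (h1 : z.re ∈ Icc (0:ℝ) 1) (h2 : z.im ∈ Icc (-(1/2):ℝ) (1/2)) (ρ : ℝ)
    (hρ : ρ < 1/2) : Metric.closedBall z ρ ⊆ rectU := by
  intro w hw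
  rw [mem_closedBall_iff_norm] at hw
  have a1 := (Complex.abs_re_le_norm (w - z)).trans hw
  have a2 := (Complex.abs_im_le_norm (w - z)).trans hw
  rw [abs_le] at a1 a2
  simp only [Complex.sub_re, Complex.sub_im] at a1 a2
  simp only [rectU, Complex.mem_reProdIm, mem_Ioo]
  obtain ⟨h11, h12⟩ := h1
  obtain ⟨h21, h22⟩ := h2
  refine ⟨⟨?_, ?_⟩, ?_, ?_⟩ <;> linarith [a1.1, a1.2, a2.1, a2.2]

lemma chain_estimate (K₀ A₀ : ℝ) (hK₀ : 0 ≤ K₀) (hA₀ : 0 ≤ A₀) (N : ℕ) : ∃ K A : ℝ, 0 ≤ K ∧ 0 ≤ A ∧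
    ∀ (G : ℂ → ℂ) (S δ : ℝ), DifferentiableOn ℂ G rectU → 0 ≤ δ → (∀ z ∈ rectU, ‖G z‖ ≤ S) →
    ∀ p : ℕ → ℂ, (∀ i, (p i).re ∈ Icc (0:ℝ) 1 ∧ (p i).im ∈ Icc (-(1/2):ℝ) (1/2)) →
    (∀ i, ‖p (i+1) - p i‖ ≤ 1/16) →
    (∀ n : ℕ, ∀ z ∈ Metric.closedBall (p 0) (1/16), ‖G z‖ ≤ K₀ * (δ * A₀^n + S * (1/2)^n)) →
    (∀ n : ℕ, ∀ z ∈ Metric.closedBall (p N) (1/16), ‖G z‖ ≤ K * (δ * A^n + S * (1/2)^n)) := by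
  induction N with
  | zero => exact ⟨K₀, A₀, hK₀, hA₀, fun G S δ _ _ _ p _ _ h => h⟩
  | succ N ih =>
    obtain ⟨K, A, hK, hA, h⟩ := ih
    refine ⟨K + 2, 2 * A^2, by positivity, by positivity, ?_⟩
    intro G S δ hG hδ hS p hp hp2 h0 n z hz
    have h1 := h G S δ hG hδ hS p hp hp2 h0 (2 * n)
    have hsub := ball_subset_rectU (p N) (hp N).1 (hp N).2 (4 * (1/16)) (by norm_num)
    have hS0 : 0 ≤ S := (norm_nonneg _).trans (hS (p N) (hsub (Metric.mem_closedBall_self (by norm_num))))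
    have h2 := doubling_step (p N) (1/16) (by norm_num) rectU G hG hsub _ S h1 hS n z (by
      rw [mem_closedBall_iff_norm] at hz ⊢
      have : z - p N = (z - p (N+1)) + (p (N+1) - p N) := by ring
      rw [this]
      refine (norm_add_le _ _).trans ?_
      linarith [hp2 N])
    refine h2.trans ?_
    have e1 : K * (δ * A ^ (2 * n) + S * (1 / 2) ^ (2 * n)) * 2 ^ n
        = K * (δ * (2 * A^2)^n + S * (1/2)^n) := by
      rw [mul_pow, pow_mul, pow_mul]
      have : ((1/2:ℝ)^2)^n * 2^n = (1/2)^n := by rw [← mul_pow]; norm_num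
      calc _ = K * (δ * (2^n * (A^2)^n) + S * (((1/2:ℝ)^2)^n * 2^n)) := by ring
        _ = _ := by rw [this]
    rw [e1]
    have : 0 ≤ δ * (2 * A^2)^n := by positivity
    nlinarith

lemma holo_estimate (m : ℝ) (hm : 0 < m) : ∃ K A : ℝ, 0 ≤ K ∧ 0 ≤ A ∧
    ∀ (G : ℂ → ℂ) (S δ : ℝ) (ω : Set ℝ), DifferentiableOn ℂ G rectU → 0 ≤ δ →
    (∀ z ∈ rectU, ‖G z‖ ≤ S) → ω ⊆ Icc 0 1 → ENNReal.ofReal m ≤ volume ω →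
    (∀ x ∈ ω, ‖G (x:ℂ)‖ ≤ δ) → ∀ z : ℂ, z.re ∈ Icc (0:ℝ) 1 → z.im ∈ Icc (-(1/2):ℝ) (1/2) →
    ∀ n : ℕ, ‖G z‖ ≤ K * (δ * A^n + S * (1/2)^n) := by
  obtain ⟨K, A, hK, hA, h⟩ := chain_estimate (2 * Real.exp 1) (2 * Real.exp 1 / (m/8))
    (by positivity) (by positivity) 32
  refine ⟨K, A, hK, hA, ?_⟩
  intro G S δ ω hG hδ hS hω hωm hωδ z hz1 hz2 n
  -- pigeonhole
  obtain ⟨i, hi, hiω⟩ : ∃ i ∈ Finset.range 8, ENNReal.ofReal (m/8) ≤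
      volume (ω ∩ Icc (((2*i+1 : ℕ):ℝ)/16 - 1/16) (((2*i+1 : ℕ):ℝ)/16 + 1/16)) := by
    by_contra hcon
    push Not at hcon
    have hcov : ω ⊆ ⋃ i ∈ Finset.range 8, (ω ∩ Icc (((2*i+1 : ℕ):ℝ)/16 - 1/16) (((2*i+1 : ℕ):ℝ)/16 + 1/16)) := by
      intro x hx
      have hx01 := hω hx
      have hx0 : 0 ≤ 8 * x := by linarith [hx01.1]
      rw [mem_iUnion₂]
      by_cases hx1 : x < 1
      · refine ⟨⌊8 * x⌋₊, ?_, hx, ?_⟩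
        · rw [Finset.mem_range, Nat.floor_lt hx0]; push_cast; linarith
        · have a1 := Nat.floor_le hx0
          have a2 := Nat.lt_floor_add_one (8 * x)
          push_cast
          constructor <;> linarith
      · refine ⟨7, by simp, hx, ?_⟩
        push_cast
        constructor <;> linarith [hx01.2]
    have h1 := (measure_mono (μ := volume) hcov).trans (measure_biUnion_finset_le _ _)
    have h2 : ∑ i ∈ Finset.range 8, volume (ω ∩ Icc (((2*i+1 : ℕ):ℝ)/16 - 1/16) (((2*i+1 : ℕ):ℝ)/16 + 1/16))
       < ∑ i ∈ Finset.range 8, ENNReal.ofReal (m/8) := 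
      ENNReal.sum_lt_sum_of_nonempty (by simp) hcon
    have h3 : ∑ i ∈ Finset.range 8, ENNReal.ofReal (m/8) = ENNReal.ofReal m := by
      rw [Finset.sum_const, Finset.card_range, ← ENNReal.ofReal_nsmul]
      congr 1; simp; ring
    rw [h3] at h2
    exact absurd (hωm.trans h1) (not_le.2 h2)
  rw [Finset.mem_range] at hi
  set c : ℝ := ((2*i+1 : ℕ):ℝ)/16 with hc
  have hc0 : 0 ≤ c := by positivity
  have hc1 : c ≤ 1 := by
    rw [hc, div_le_one (by norm_num)]; exact_mod_cast (by omega : 2*i+1 ≤ 16)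
  have hdisc := fun n w hw => disc_estimate (m/8) (by positivity) rectU isOpen_rectU c
    (ball_subset_rectU c (by simpa using ⟨hc0, hc1⟩) (by simp) (5/16) (by norm_num))
    _ inter_subset_right hiω G hG S δ hδ hS (fun x hx => hωδ x hx.1) n w hw
  let p : ℕ → ℂ := fun j => (c:ℂ) + ((min (j/32:ℝ) 1 : ℝ) : ℂ) * (z - c)
  have hp0 : p 0 = c := by simp [p]
  have hp32 : p 32 = z := by simp [p]
  have := h G S δ hG hδ hS p ?_ ?_ (by rw [hp0]; exact hdisc) n z (by
    rw [hp32]; exact Metric.mem_closedBall_self (by norm_num))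
  · exact this
  · intro j
    set t : ℝ := min (j/32:ℝ) 1 with ht
    have ht0 : 0 ≤ t := le_min (by positivity) zero_le_one
    have ht1 : t ≤ 1 := min_le_right _ _
    have e1 : (p j).re = (1 - t) * c + t * z.re := by simp [p, ← ht]; ring
    have e2 : (p j).im = (1 - t) * 0 + t * z.im := by simp [p, ← ht]
    rw [e1, e2]
    constructor
    · exact (convex_Icc (0:ℝ) 1) ⟨hc0, hc1⟩ hz1 (by linarith) ht0 (by ring)
    · exact (convex_Icc (-(1/2):ℝ) (1/2)) (by norm_num) hz2 (by linarith) ht0 (by ring)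
  · intro j
    have e : p (j+1) - p j = ((min ((j+1:ℕ)/32:ℝ) 1 - min (j/32:ℝ) 1 : ℝ) : ℂ) * (z - c) := by
      simp only [p]; push_cast; ring
    rw [e, norm_mul, Complex.norm_real, Real.norm_eq_abs]
    have h1 : |min ((j+1:ℕ)/32:ℝ) 1 - min (j/32:ℝ) 1| ≤ 1/32 := by
      have hm := abs_min_sub_min_le_max ((j+1:ℕ)/32:ℝ) 1 (j/32:ℝ) 1
      refine hm.trans ?_
      push_cast
      rw [show ((j:ℝ)+1)/32 - j/32 = 1/32 by ring]
      norm_num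
    have h2 : ‖z - c‖ ≤ 2 := by
      refine (Complex.norm_le_abs_re_add_abs_im _).trans ?_
      have : |(z - c).re| ≤ 1 := by
        simp only [Complex.sub_re, Complex.ofReal_re]
        rw [abs_le]; constructor <;> linarith [hz1.1, hz1.2]
      have : |(z - c).im| ≤ 1 := by
        simp only [Complex.sub_im, Complex.ofReal_im]
        rw [abs_le]; constructor <;> linarith [hz2.1, hz2.2]
      linarith
    calc _ ≤ (1/32 : ℝ) * 2 := by gcongr
      _ = _ := by norm_num

/-- optimisation in `n` -/
lemma optimise (A : ℝ) (hA : 0 ≤ A) : ∃ α ∈ Ioo (0:ℝ) 1, ∃ C > 0, ∀ X S δ : ℝ, 0 ≤ δ → δ ≤ S →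
    (∀ n : ℕ, X ≤ δ * A^n + S * (1/2)^n) → X ≤ C * δ^α * S^(1-α) := by
  -- replace `A` by a power of two
  obtain ⟨k, hk⟩ := pow_unbounded_of_one_lt A (one_lt_two : (1:ℝ) < 2)
  refine ⟨1/(k+2:ℝ), ⟨by positivity, by rw [div_lt_one (by positivity)]; linarith [(Nat.cast_nonneg k : (0:ℝ) ≤ k)]⟩, 2 * 2^(k+1), by positivity, ?_⟩
  intro X S δ hδ hδS h
  have hα0 : (0:ℝ) < 1/(k+2:ℝ) := by positivity
  set α : ℝ := 1/(k+2:ℝ) with hα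
  rcases hδ.eq_or_lt with h0 | hpos
  · subst h0
    rw [Real.zero_rpow hα0.ne']
    simp only [zero_mul, zero_add, mul_zero] at h ⊢
    have ht : Filter.Tendsto (fun n : ℕ => S * (1/2:ℝ)^n) Filter.atTop (nhds (S * 0)) :=
      (tendsto_pow_atTop_nhds_zero_of_lt_one (by norm_num) (by norm_num)).const_mul S
    rw [mul_zero] at ht
    exact ge_of_tendsto' ht h
  · have hSpos : 0 < S := hpos.trans_le hδS
    -- n with 2^{n(k+2)} ≥ S/δ
    have hR : 1 ≤ S / δ := (one_le_div hpos).2 hδS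
    set R := (S/δ)^α with hRdef
    have hR1 : 1 ≤ R := Real.one_le_rpow hR hα0.le
    obtain ⟨n, hn1, hn2⟩ := exists_nat_pow_near hR1 (one_lt_two : (1:ℝ) < 2)
    have hX := h (n+1)
    have hRk : R^(k+2) = S/δ := by
      rw [hRdef, ← Real.rpow_natCast, ← Real.rpow_mul (by positivity)]
      push_cast
      rw [hα, one_div, inv_mul_cancel₀ (by positivity), Real.rpow_one]
    have hRk1 : δ * R^(k+1) = S / R := by
      have : R ^ (k+2) = R^(k+1) * R := pow_succ _ _
      rw [this] at hRk
      rw [eq_div_iff (by positivity), mul_assoc, hRk]; field_simp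
    have h1 : δ * A^(n+1) ≤ 2^(k+1) * (S / R) := by
      rw [← hRk1]
      have : A^(n+1) ≤ 2^(k+1) * R^(k+1) := by
        calc A^(n+1) ≤ (2^k)^(n+1) := by gcongr
          _ = 2^k * (2^n)^k := by rw [← pow_mul, ← pow_mul, ← pow_add]; ring_nf
          _ ≤ 2^(k+1) * R^(k+1) := by
            gcongr
            · norm_num
            · omega
            · calc ((2:ℝ)^n)^k ≤ R^k := by gcongr
                _ ≤ R^(k+1) := pow_le_pow_right₀ hR1 (by omega)
      calc δ * A^(n+1) ≤ δ * (2^(k+1) * R^(k+1)) := by gcongr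
        _ = _ := by ring
    have h2 : S * (1/2)^(n+1) ≤ S / R := by
      rw [one_div, inv_pow, ← div_eq_mul_inv]
      gcongr
    have h3 : S / R = δ^α * S^(1-α) := by
      rw [hRdef, Real.div_rpow hSpos.le hpos.le, Real.rpow_sub hSpos, Real.rpow_one]
      field_simp
    have h4 : 0 ≤ S / R := by positivity
    have h5 : (1:ℝ) ≤ 2^(k+1) := one_le_pow₀ (by norm_num)
    rw [mul_assoc, ← h3]
    nlinarith

/-- twice the Wirtinger derivative `∂/∂z̄` -/
noncomputable def dbar (F : ℂ → ℂ) (z : ℂ) : ℂ := fderiv ℝ F z 1 + Complex.I * fderiv ℝ F z Complex.I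

lemma pompeiu_zero (k : ℂ → ℂ) (hk : ContDiff ℝ 1 k) (hks : HasCompactSupport k) :
    ∫ ζ : ℂ, dbar k ζ * ζ⁻¹ = -(2 * Real.pi) * k 0 := by
  obtain ⟨ρ, hρ0, hρ⟩ := hks.isCompact.isBounded.exists_pos_norm_lt
  have hk0 : ∀ z : ℂ, ρ ≤ ‖z‖ → k z = 0 := by
    intro z hz
    by_contra h
    exact absurd (hρ z (subset_tsupport _ h)) (not_lt.2 hz)
  have hk0' : ∀ z : ℂ, ρ ≤ ‖z‖ → fderiv ℝ k z = 0 := by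
    intro z hz
    by_contra h
    exact absurd (hρ z (support_fderiv_subset ℝ h)) (not_lt.2 hz)
  let E : ℝ → ℂ := fun θ => (Real.cos θ : ℂ) + Real.sin θ * Complex.I
  have hEc : Continuous E := by fun_prop
  have hEn : ∀ θ, ‖E θ‖ = 1 := by
    intro θ
    have := Complex.norm_cos_add_sin_mul_I θ
    simpa [E] using this
  have hEd : ∀ θ, HasDerivAt E (Complex.I * E θ) θ := by
    intro θ
    have h1 : HasDerivAt (fun t : ℝ => ((Real.cos t : ℝ) : ℂ)) ((-Real.sin θ : ℝ) : ℂ) θ :=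
      (Real.hasDerivAt_cos θ).ofReal_comp
    have h2 : HasDerivAt (fun t : ℝ => ((Real.sin t : ℝ) : ℂ)) ((Real.cos θ : ℝ) : ℂ) θ :=
      (Real.hasDerivAt_sin θ).ofReal_comp
    have h3 := h1.add (h2.mul_const Complex.I)
    refine h3.congr_deriv ?_
    simp only [E]
    push_cast
    linear_combination (-(Complex.sin θ)) * Complex.I_mul_I
  have hfc : Continuous (fderiv ℝ k) := hk.continuous_fderiv one_ne_zero
  have hkd : ∀ z, HasFDerivAt k (fderiv ℝ k z) z := fun z => (hk.differentiable one_ne_zero z).hasFDerivAt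
  let R1 : ℝ × ℝ → ℂ := fun p => fderiv ℝ k (p.1 * E p.2) (E p.2)
  let R2 : ℝ × ℝ → ℂ := fun p => Complex.I * fderiv ℝ k (p.1 * E p.2) (Complex.I * E p.2)
  have hR1c : Continuous R1 := by
    have : Continuous fun p : ℝ × ℝ => fderiv ℝ k (p.1 * E p.2) := hfc.comp (by fun_prop)
    exact this.clm_apply (by fun_prop)
  have hR2c : Continuous R2 := by
    have : Continuous fun p : ℝ × ℝ => fderiv ℝ k (p.1 * E p.2) := hfc.comp (by fun_prop)
    exact continuous_const.mul (this.clm_apply (by fun_prop))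
  have hz : ∀ p : ℝ × ℝ, ρ ≤ p.1 → fderiv ℝ k (p.1 * E p.2) = 0 := by
    intro p hp
    apply hk0'
    rw [norm_mul, hEn, mul_one, Complex.norm_real, Real.norm_eq_abs]
    exact hp.trans (le_abs_self _)
  have hintg : ∀ R : ℝ × ℝ → ℂ, Continuous R → (∀ p : ℝ × ℝ, ρ ≤ p.1 → R p = 0) →
      IntegrableOn R (Ioi (0:ℝ) ×ˢ Ioo (-Real.pi) Real.pi) := by
    intro R hR h0
    have h1 : IntegrableOn R (Icc 0 ρ ×ˢ Icc (-Real.pi) Real.pi) :=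
      hR.continuousOn.integrableOn_compact (isCompact_Icc.prod isCompact_Icc)
    refine h1.of_forall_sdiff_eq_zero (measurableSet_Ioi.prod measurableSet_Ioo) ?_
    rintro p ⟨⟨hp1, hp2⟩, hp3⟩
    apply h0
    by_contra h
    push Not at h
    exact hp3 ⟨⟨le_of_lt hp1, h.le⟩, Ioo_subset_Icc_self hp2⟩
  have hI1 := hintg R1 hR1c (fun p hp => by simp only [R1]; rw [hz p hp]; simp)
  have hI2 := hintg R2 hR2c (fun p hp => by simp only [R2]; rw [hz p hp]; simp)
  rw [← Complex.integral_comp_polarCoord_symm, polarCoord_target]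
  have hcongr : ∫ p in Ioi (0:ℝ) ×ˢ Ioo (-Real.pi) Real.pi,
      p.1 • (dbar k (Complex.polarCoord.symm p) * (Complex.polarCoord.symm p)⁻¹) =
      ∫ p in Ioi (0:ℝ) ×ˢ Ioo (-Real.pi) Real.pi, (R1 p + R2 p) := by
    refine setIntegral_congr_fun (measurableSet_Ioi.prod measurableSet_Ioo) ?_
    rintro p ⟨hp1, hp2⟩
    have hp0 : (p.1 : ℂ) ≠ 0 := by exact_mod_cast (ne_of_gt hp1)
    have hE0 : E p.2 ≠ 0 := by
      intro h; have := hEn p.2; rw [h] at this; simp at this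
    have hpos : Complex.polarCoord.symm p = p.1 * E p.2 := by simp [E]
    simp only [R1, R2]
    rw [hpos]
    set A := fderiv ℝ k (p.1 * E p.2) 1 with hA
    set B := fderiv ℝ k (p.1 * E p.2) Complex.I with hB
    have e1 : fderiv ℝ k (p.1 * E p.2) (E p.2) = Real.cos p.2 * A + Real.sin p.2 * B := by
      have : E p.2 = Real.cos p.2 • (1:ℂ) + Real.sin p.2 • Complex.I := by
        simp [E]
      conv_lhs => rw [show (fderiv ℝ k (p.1 * E p.2)) (E p.2) = (fderiv ℝ k (p.1 * E p.2)) (Real.cos p.2 • (1:ℂ) + Real.sin p.2 • Complex.I) from congrArg _ this]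
      rw [map_add, map_smul, map_smul]
      simp [hA, hB]
    have e2 : fderiv ℝ k (p.1 * E p.2) (Complex.I * E p.2) = -Real.sin p.2 * A + Real.cos p.2 * B := by
      have : Complex.I * E p.2 = (-Real.sin p.2) • (1:ℂ) + Real.cos p.2 • Complex.I := by
        simp only [E, Complex.real_smul]
        push_cast
        linear_combination (Complex.sin p.2) * Complex.I_mul_I
      rw [this, map_add, map_smul, map_smul]
      simp [hA, hB]
    have e3 : (E p.2)⁻¹ = Real.cos p.2 - Real.sin p.2 * Complex.I := by
      rw [inv_eq_iff_eq_inv, eq_comm, inv_eq_iff_eq_inv, eq_comm]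
      apply inv_eq_of_mul_eq_one_right
      simp only [E]
      have : (Real.cos p.2 : ℂ)^2 + (Real.sin p.2 : ℂ)^2 = 1 := by
        exact_mod_cast Real.cos_sq_add_sin_sq p.2
      linear_combination this - (Real.sin p.2 : ℂ)^2 * Complex.I_mul_I
    rw [e1, e2, mul_inv, e3, Complex.real_smul, dbar]
    rw [← hA, ← hB]
    have : ∀ X Y : ℂ, (p.1 : ℂ) * (X * ((p.1:ℂ)⁻¹ * Y)) = X * Y := by
      intro X Y; field_simp
    rw [this]
    linear_combination (-(Real.sin p.2 : ℂ) * B) * Complex.I_mul_I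
  rw [hcongr, integral_add hI1 hI2]
  have hV : (volume : Measure (ℝ × ℝ)) = (volume : Measure ℝ).prod volume := rfl
  have i1 : ∫ p in Ioi (0:ℝ) ×ˢ Ioo (-Real.pi) Real.pi, R1 p = -(2 * Real.pi) * k 0 := by
    rw [hV, ← Measure.prod_restrict, integral_prod_symm]
    · have : ∀ θ : ℝ, ∫ r in Ioi (0:ℝ), R1 (r, θ) = - k 0 := by
        intro θ
        let h : ℝ → ℂ := fun r => k (r * E θ)
        have hh : ContDiff ℝ 1 h := hk.comp (by
          exact (Complex.ofRealCLM.contDiff).mul contDiff_const)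
        have hhs : HasCompactSupport h := by
          refine HasCompactSupport.intro (isCompact_Icc (a := -ρ) (b := ρ)) ?_
          intro r hr
          apply hk0
          rw [norm_mul, hEn, mul_one, Complex.norm_real, Real.norm_eq_abs]
          by_contra hcon
          push Not at hcon
          exact hr (abs_le.1 hcon.le)
        have := hhs.integral_Ioi_deriv_eq hh 0
        have e : ∀ r : ℝ, deriv h r = R1 (r, θ) := by
          intro r
          apply HasDerivAt.deriv
          have h1 : HasDerivAt (fun r : ℝ => (r : ℂ) * E θ) (1 * E θ) r :=
            (Complex.ofRealCLM.hasDerivAt (x := r)).mul_const _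
          have h2 := (hkd (r * E θ)).comp_hasDerivAt r h1
          exact (show HasDerivAt h _ r from h2).congr_deriv (by simp [R1])
        simp_rw [e] at this
        rw [this]; simp [h]
      simp_rw [this]
      simp only [integral_const, MeasurableSet.univ, measureReal_restrict_apply, univ_inter,
        Real.volume_real_Ioo, Complex.real_smul]
      rw [max_eq_left (by linarith [Real.pi_pos])]
      push_cast; ring
    · rw [Measure.prod_restrict]; exact hI1
  have i2 : ∫ p in Ioi (0:ℝ) ×ˢ Ioo (-Real.pi) Real.pi, R2 p = 0 := by
    rw [hV, setIntegral_prod _ hI2]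
    refine (setIntegral_congr_fun measurableSet_Ioi (g := fun _ => (0:ℂ)) ?_).trans (by simp)
    intro r hr
    have hr0 : (r:ℂ) ≠ 0 := by exact_mod_cast (ne_of_gt hr)
    simp only
    rw [← integral_Ioc_eq_integral_Ioo, ← intervalIntegral.integral_of_le (by linarith [Real.pi_pos])]
    have hd : ∀ θ ∈ uIcc (-Real.pi) Real.pi,
        HasDerivAt (fun θ => Complex.I * (r:ℂ)⁻¹ * k (r * E θ)) (R2 (r, θ)) θ := by
      intro θ _
      have h1 : HasDerivAt (fun θ : ℝ => (r : ℂ) * E θ) (r * (Complex.I * E θ)) θ :=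
        (hEd θ).const_mul _
      have h2 := ((hkd (r * E θ)).comp_hasDerivAt θ h1).const_mul (Complex.I * (r:ℂ)⁻¹)
      refine h2.congr_deriv ?_
      have e : fderiv ℝ k (r * E θ) ((r:ℂ) * (Complex.I * E θ)) =
          (r:ℂ) * fderiv ℝ k (r * E θ) (Complex.I * E θ) := by
        have := (fderiv ℝ k (r * E θ)).map_smul r (Complex.I * E θ)
        simpa only [Complex.real_smul] using this
      rw [e]
      simp only [R2]
      generalize fderiv ℝ k (r * E θ) (Complex.I * E θ) = X
      field_simp
    rw [intervalIntegral.integral_eq_sub_of_hasDerivAt hd]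
    · simp [E]
    · exact (hR2c.comp (by fun_prop : Continuous fun θ : ℝ => (r, θ))).intervalIntegrable _ _
  rw [i1, i2, add_zero]

lemma locInt_inv : LocallyIntegrable (fun z : ℂ => z⁻¹) := by
  refine locallyIntegrable_of_norm_le_rpow (C := 1) (α := 1) ?_ ?_ ?_ ?_
  · simp [Complex.finrank_real_complex]
  · simp [Complex.finrank_real_complex]
  · refine Filter.Eventually.of_forall fun z => ?_
    rw [norm_inv, one_mul, Real.rpow_neg_one]
  · exact measurable_inv.aestronglyMeasurable

lemma pompeiu (k : ℂ → ℂ) (hk : ContDiff ℝ 1 k) (hks : HasCompactSupport k) (z : ℂ) :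
    ∫ ζ : ℂ, ζ⁻¹ * dbar k (z - ζ) = (2 * Real.pi) * k z := by
  have h := pompeiu_zero (fun ζ => k (z - ζ)) (hk.comp (by fun_prop))
    (hks.comp_homeomorph (Homeomorph.subLeft z))
  have e : ∀ ζ, dbar (fun ζ => k (z - ζ)) ζ = - dbar k (z - ζ) := by
    intro ζ
    have h1 : HasFDerivAt (fun ζ => k (z - ζ)) ((fderiv ℝ k (z - ζ)).comp (-ContinuousLinearMap.id ℝ ℂ)) ζ :=
      (hk.differentiable one_ne_zero (z - ζ)).hasFDerivAt.comp ζ ((hasFDerivAt_id ζ).const_sub z)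
    rw [dbar, h1.fderiv, dbar]
    simp only [ContinuousLinearMap.comp_apply, neg_apply, ContinuousLinearMap.id_apply, map_neg]
    ring
  simp_rw [e, sub_zero, neg_mul, integral_neg] at h
  simp_rw [mul_comm (_⁻¹ : ℂ)]
  linear_combination -h

/-- solving the `∂̄` equation -/
lemma exists_dbar_solution : ∃ C : ℝ, 0 ≤ C ∧ ∀ (g : ℂ → ℂ) (B : ℝ), ContDiff ℝ 1 g →
    (∀ z, g z ≠ 0 → ‖z‖ ≤ 6) → (∀ z, ‖g z‖ ≤ B) →
    ∃ u : ℂ → ℂ, ContDiff ℝ 1 u ∧ (∀ z, dbar u z = g z) ∧ ∀ z, ‖z‖ ≤ 6 → ‖u z‖ ≤ C * B := by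
  refine ⟨(2 * Real.pi)⁻¹ * ∫ ζ in Metric.closedBall (0:ℂ) 12, ‖ζ⁻¹‖, by positivity, ?_⟩
  intro g B hg hgs hgB
  have hcs : HasCompactSupport g := by
    refine HasCompactSupport.intro (isCompact_closedBall (0:ℂ) 6) ?_
    intro z hz
    by_contra h
    exact hz (mem_closedBall_zero_iff.2 (hgs z h))
  let L := ContinuousLinearMap.mul ℝ ℂ
  let w : ℂ → ℂ := convolution (fun z : ℂ => z⁻¹) g L volume
  have hw : ContDiff ℝ 1 w := hcs.contDiff_convolution_right L locInt_inv hg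
  refine ⟨fun z => ((2 * Real.pi : ℝ) : ℂ)⁻¹ * w z, contDiff_const.mul hw, ?_, ?_⟩
  · intro z
    have hd := hcs.hasFDerivAt_convolution_right L locInt_inv hg z
    have hd2 := hd.const_mul (((2 * Real.pi : ℝ) : ℂ)⁻¹)
    rw [dbar, hd2.fderiv]
    have hfs : HasCompactSupport (fderiv ℝ g) := hcs.fderiv ℝ
    have hex : ConvolutionExistsAt (fun z : ℂ => z⁻¹) (fderiv ℝ g) z (L.precompR ℂ) volume :=
      hfs.convolutionExists_right _ locInt_inv (hg.continuous_fderiv one_ne_zero) z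
    have key : ∀ v : ℂ, (convolution (fun z : ℂ => z⁻¹) (fderiv ℝ g) (L.precompR ℂ) volume z) v =
        ∫ ζ : ℂ, ζ⁻¹ * fderiv ℝ g (z - ζ) v := by
      intro v
      rw [convolution, ContinuousLinearMap.integral_apply hex.integrable]
      rfl
    have hintg : ∀ v : ℂ, Integrable (fun ζ : ℂ => ζ⁻¹ * fderiv ℝ g (z - ζ) v) := by
      intro v
      exact hex.integrable.apply_continuousLinearMap v
    simp only [smul_apply, key, smul_eq_mul]
    have hp := pompeiu g hg hcs z
    have e : ∫ ζ : ℂ, ζ⁻¹ * dbar g (z - ζ) = (∫ ζ : ℂ, ζ⁻¹ * fderiv ℝ g (z - ζ) 1) +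
        Complex.I * ∫ ζ : ℂ, ζ⁻¹ * fderiv ℝ g (z - ζ) Complex.I := by
      rw [← integral_const_mul, ← integral_add (hintg _) ((hintg _).const_mul _)]
      congr 1
      ext ζ
      rw [dbar]; ring
    rw [e] at hp
    have hpi : (Real.pi : ℂ) ≠ 0 := by exact_mod_cast Real.pi_ne_zero
    push_cast
    generalize (∫ ζ : ℂ, ζ⁻¹ * fderiv ℝ g (z - ζ) 1) = X at hp ⊢
    generalize (∫ ζ : ℂ, ζ⁻¹ * fderiv ℝ g (z - ζ) Complex.I) = Y at hp ⊢
    field_simp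
    linear_combination hp
  · intro z hz
    rw [norm_mul, norm_inv, Complex.norm_real, Real.norm_of_nonneg (by positivity), mul_assoc]
    gcongr
    have hin : IntegrableOn (fun ζ : ℂ => ‖ζ⁻¹‖) (Metric.closedBall (0:ℂ) 12) :=
      (locInt_inv.integrableOn_isCompact (isCompact_closedBall _ _)).norm
    have hB0 : 0 ≤ B := (norm_nonneg _).trans (hgB 0)
    rw [← integral_mul_const, ← integral_indicator measurableSet_closedBall]
    refine norm_integral_le_of_norm_le ?_ ?_
    · exact (integrable_indicator_iff measurableSet_closedBall).2 (hin.mul_const B)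
    · refine Filter.Eventually.of_forall fun ζ => ?_
      change ‖ζ⁻¹ * g (z - ζ)‖ ≤ _
      by_cases h : ζ ∈ Metric.closedBall (0:ℂ) 12
      · rw [indicator_of_mem h, norm_mul]
        gcongr
        exact hgB _
      · rw [indicator_of_notMem h]
        have : g (z - ζ) = 0 := by
          by_contra hne
          have h1 := hgs _ hne
          apply h
          rw [mem_closedBall_zero_iff]
          have : ζ = z - (z - ζ) := by ring
          rw [this]
          exact (norm_sub_le _ _).trans (by linarith)
        rw [this]; simp

lemma exists_riccati (M : ℝ) (hM : 1 ≤ M) (V : ℝ → ℝ) (hV : Continuous V) (h1 : ∀ x, 1 ≤ V x)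
    (h2 : ∀ x, V x ≤ M) : ∃ b : ℝ → ℝ, ContDiff ℝ 1 b ∧ ∀ x ∈ Icc (-6:ℝ) 6,
      0 ≤ b x ∧ b x ≤ M + 1 ∧ HasDerivAt b (V x - b x ^ 2) x := by
  let c : ℝ → ℝ := fun x => max 0 (min x (M+1))
  have hc0 : ∀ x, 0 ≤ c x := fun x => le_max_left _ _
  have hcN : ∀ x, c x ≤ M+1 := fun x => max_le (by linarith) (min_le_right _ _)
  have hcc : Continuous c := by fun_prop
  have hcl : ∀ x y, |c x - c y| ≤ |x - y| := by
    intro x y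
    refine (abs_max_sub_max_le_max _ _ _ _).trans ?_
    simp only [sub_self, abs_zero]
    refine max_le (abs_nonneg _) ?_
    refine (abs_min_sub_min_le_max _ _ _ _).trans ?_
    simp
  let f : ℝ → ℝ → ℝ := fun t x => V t - c x ^ 2
  let K : NNReal := ⟨2 * (M+1), by linarith⟩
  let L : NNReal := ⟨M + (M+1)^2, by positivity⟩
  have hP : IsPicardLindelof f (tmin := -7) (tmax := 7) ⟨-7, by norm_num⟩ 0 (L * 14) 0 L K := by
    refine ⟨?_, ?_, ?_, ?_⟩
    · intro t _
      refine LipschitzWith.lipschitzOnWith (LipschitzWith.of_dist_le_mul ?_)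
      intro x y
      simp only [f, Real.dist_eq, K]
      have : V t - c x ^ 2 - (V t - c y ^ 2) = (c y + c x) * (c y - c x) := by ring
      rw [this, abs_mul, abs_of_nonneg (add_nonneg (hc0 _) (hc0 _)), abs_sub_comm (c y)]
      have := hcl x y
      have h3 := hcN x
      have h4 := hcN y
      change _ ≤ (2 * (M+1)) * |x - y|
      gcongr
      linarith
    · intro x _
      exact (hV.sub continuous_const).continuousOn
    · intro t _ x _
      change |V t - c x ^ 2| ≤ M + (M+1)^2
      have h3 : c x ^ 2 ≤ (M+1)^2 := by
        have := hc0 x; have := hcN x; gcongr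
      rw [abs_le]; constructor <;> nlinarith [h1 t, h2 t, sq_nonneg (c x)]
    · simp only [NNReal.coe_mul]
      norm_num
  obtain ⟨β, hβ0, hβ⟩ := hP.exists_eq_forall_mem_Icc_hasDerivWithinAt₀
  simp only at hβ0
  have hβc : ContinuousOn β (Icc (-7) 7) := fun t ht => (hβ t ht).continuousWithinAt
  have hβr : ∀ t ∈ Ico (-7:ℝ) 7, HasDerivWithinAt β (f t (β t)) (Ici t) t := by
    intro t ht
    exact (hβ t (Ico_subset_Icc_self ht)).mono_of_mem_nhdsWithin (Icc_mem_nhdsGE_of_mem ht)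
  have hup : ∀ ⦃t⦄, t ∈ Icc (-7:ℝ) 7 → β t ≤ M + 1 := by
    refine image_le_of_deriv_right_lt_deriv_boundary' hβc hβr (B := fun _ => M+1) (B' := fun _ => 0)
      (by rw [hβ0]; linarith) continuousOn_const (fun x _ => hasDerivWithinAt_const _ _ _) ?_
    intro t _ h
    simp only [f]
    have : c (β t) = M + 1 := by rw [h]; simp [c]; linarith
    rw [this]; nlinarith [h2 t]
  have hlo : ∀ ⦃t⦄, t ∈ Icc (-7:ℝ) 7 → -β t ≤ 0 := by
    refine image_le_of_deriv_right_lt_deriv_boundary' (f := fun t => - β t) hβc.neg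
      (fun t ht => (hβr t ht).neg) (B := fun _ => 0) (B' := fun _ => 0)
      (by simp [hβ0]) continuousOn_const (fun x _ => hasDerivWithinAt_const _ _ _) ?_
    intro t _ h
    simp only [f]
    have h0 : β t = 0 := by simpa using h
    have : c (β t) = 0 := by rw [h0]; simp [c]; 
    rw [this]; nlinarith [h1 t]
  have h77 : (-7:ℝ) ≤ 7 := by norm_num
  let γ : ℝ → ℝ := IccExtend h77 ((Icc (-7:ℝ) 7).domRestrict β)
  have hγc : Continuous γ := (continuousOn_iff_continuous_domRestrict.1 hβc).Icc_extend'
  have hγ : ∀ t ∈ Icc (-7:ℝ) 7, γ t = β t := fun t ht => by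
    simp [γ, IccExtend_of_mem _ _ ht]
  let b : ℝ → ℝ := fun t => ∫ s in (-7:ℝ)..t, f s (γ s)
  have hfc : Continuous fun s => f s (γ s) := by
    simp only [f]; fun_prop
  have hbd : ∀ t, HasDerivAt b (f t (γ t)) t := fun t => hfc.integral_hasStrictDerivAt _ _ |>.hasDerivAt
  have hbβ : ∀ t ∈ Icc (-7:ℝ) 7, b t = β t := by
    intro t ht
    have : ∫ s in (-7:ℝ)..t, f s (γ s) = β t - β (-7) := by
      refine intervalIntegral.integral_eq_sub_of_hasDerivAt_of_le ht.1 (hβc.mono (Icc_subset_Icc_right ht.2)) ?_ (hfc.intervalIntegrable _ _)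
      intro s hs
      have hs' : s ∈ Icc (-7:ℝ) 7 := ⟨hs.1.le, hs.2.le.trans ht.2⟩
      rw [hγ s hs']
      exact (hβ s hs').hasDerivAt (Icc_mem_nhds hs.1 (hs.2.trans_le ht.2))
    simp only [b]
    rw [this, hβ0, sub_zero]
  refine ⟨b, ?_, ?_⟩
  · rw [contDiff_one_iff_deriv]
    refine ⟨fun t => (hbd t).differentiableAt, ?_⟩
    rw [show deriv b = fun t => f t (γ t) from funext fun t => (hbd t).deriv]
    exact hfc
  · intro x hx
    have hx' : x ∈ Icc (-7:ℝ) 7 := ⟨by linarith [hx.1], by linarith [hx.2]⟩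
    have e := hbβ x hx'
    have l1 := hup hx'
    have l2 := hlo hx'
    refine ⟨by rw [e]; linarith, by rw [e]; exact l1, ?_⟩
    refine (hbd x).congr_deriv ?_
    rw [hγ x hx', e]
    have : c (β x) = β x := by
      simp only [c]; rw [min_eq_left l1, max_eq_right (by linarith)]
    simp only [f]; rw [this]

/-- twice the Wirtinger derivative `∂/∂z` -/
noncomputable def dd (F : ℂ → ℂ) (z : ℂ) : ℂ := fderiv ℝ F z 1 - Complex.I * fderiv ℝ F z Complex.I

lemma dbar_mul {f g : ℂ → ℂ} {z : ℂ} (hf : DifferentiableAt ℝ f z) (hg : DifferentiableAt ℝ g z) :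
    dbar (fun z => f z * g z) z = dbar f z * g z + f z * dbar g z := by
  simp only [dbar]
  rw [fderiv_fun_mul hf hg]
  simp only [add_apply, smul_apply, smul_eq_mul]
  ring

lemma dbar_contDiff {f : ℂ → ℂ} {n m : WithTop ℕ∞} (hf : ContDiff ℝ n f) (h : m + 1 ≤ n) :
    ContDiff ℝ m (dbar f) := by
  have h1 : ContDiff ℝ m (fderiv ℝ f) := hf.fderiv_right h
  have h2 : ∀ v : ℂ, ContDiff ℝ m (fun z => fderiv ℝ f z v) := fun v => h1.clm_apply contDiff_const
  exact (h2 1).add (contDiff_const.mul (h2 _))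

lemma dd_contDiff {f : ℂ → ℂ} {n m : WithTop ℕ∞} (hf : ContDiff ℝ n f) (h : m + 1 ≤ n) :
    ContDiff ℝ m (dd f) := by
  have h1 : ContDiff ℝ m (fderiv ℝ f) := hf.fderiv_right h
  have h2 : ∀ v : ℂ, ContDiff ℝ m (fun z => fderiv ℝ f z v) := fun v => h1.clm_apply contDiff_const
  exact (h2 1).sub (contDiff_const.mul (h2 _))

lemma dbar_support {f : ℂ → ℂ} : Function.support (dbar f) ⊆ tsupport f := by
  intro z hz
  apply support_fderiv_subset ℝ
  intro h
  apply hz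
  simp [dbar, h]

lemma dd_support {f : ℂ → ℂ} : Function.support (dd f) ⊆ tsupport f := by
  intro z hz
  apply support_fderiv_subset ℝ
  intro h
  apply hz
  simp [dd, h]

/-- a smooth cutoff -/
lemma exists_cutoff (r R : ℝ) (hr : 0 < r) (hR : r < R) : ∃ χ : ℂ → ℂ, ContDiff ℝ 2 χ ∧
    (∀ z, ‖z‖ ≤ r → χ z = 1) ∧ (tsupport χ ⊆ Metric.closedBall 0 R) ∧ (∀ z, ‖χ z‖ ≤ 1) := by
  let B : ContDiffBump (0:ℂ) := ⟨r, R, hr, hR⟩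
  have hs : tsupport (fun z => (B z : ℂ)) ⊆ Metric.closedBall 0 R := by
    refine closure_minimal ?_ Metric.isClosed_closedBall
    intro z hz
    have : z ∈ Function.support B := fun h => hz (by simp [h])
    rw [B.support_eq] at this
    exact Metric.ball_subset_closedBall this
  refine ⟨fun z => (B z : ℂ), Complex.ofRealCLM.contDiff.comp B.contDiff, ?_, hs, ?_⟩
  · intro z hz
    change ((B z : ℝ) : ℂ) = 1
    rw [B.one_of_mem_closedBall (by simpa [B] using hz)]; simp
  · intro z
    rw [Complex.norm_real, Real.norm_of_nonneg B.nonneg]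
    exact B.le_one

lemma grad_bound : ∃ C : ℝ, 0 ≤ C ∧ ∀ (P : ℂ → ℂ) (S T : ℝ), ContDiff ℝ 2 P →
    (∀ z, ‖z‖ ≤ 1/2 → ‖P z‖ ≤ S) → (∀ z, ‖z‖ ≤ 1/2 → ‖dbar (dd P) z‖ ≤ T) →
    ‖dd P 0‖ ≤ C * (S + T) := by
  obtain ⟨χ, hχ, hχ1, hχs, hχb⟩ := exists_cutoff (1/4) (1/2) (by norm_num) (by norm_num)
  have hχc : HasCompactSupport χ :=
    HasCompactSupport.of_support_subset_isCompact (isCompact_closedBall (0:ℂ) (1/2))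
      ((subset_tsupport _).trans hχs)
  let κ : ℂ → ℂ := fun ζ => dbar χ ζ * ζ⁻¹
  have hdχ : ContDiff ℝ 1 (dbar χ) := dbar_contDiff hχ (by norm_num)
  have hdχ0 : ∀ ζ : ℂ, ‖ζ‖ < 1/4 → dbar χ ζ = 0 := by
    intro ζ hζ
    have : χ =ᶠ[nhds ζ] fun _ => 1 := by
      filter_upwards [(isOpen_lt continuous_norm continuous_const).mem_nhds hζ] with y hy
      exact hχ1 y (le_of_lt hy)
    simp [dbar, this.fderiv_eq]
  have hκ : ContDiff ℝ 1 κ := by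
    rw [contDiff_iff_contDiffAt]
    intro ζ
    by_cases h : ζ = 0
    · subst h
      have : κ =ᶠ[nhds 0] fun _ => 0 := by
        filter_upwards [(isOpen_lt continuous_norm continuous_const).mem_nhds
          (show ‖(0:ℂ)‖ < 1/4 by norm_num)] with y hy
        simp only [κ]
        rw [hdχ0 y hy, zero_mul]
      exact contDiffAt_const.congr_of_eventuallyEq this
    · exact hdχ.contDiffAt.mul (contDiffAt_inv ℝ h)
  have hκs : tsupport κ ⊆ Metric.closedBall 0 (1/2) := by
    refine closure_minimal ?_ Metric.isClosed_closedBall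
    intro z hz
    apply hχs
    apply dbar_support
    intro h; exact hz (by simp [κ, h])
  have hκc : HasCompactSupport κ :=
    HasCompactSupport.of_support_subset_isCompact (isCompact_closedBall (0:ℂ) (1/2))
      ((subset_tsupport _).trans hκs)
  have hddκ : Continuous (dd κ) := (dd_contDiff (m := 0) hκ (by simp)).continuous
  have hddκc : HasCompactSupport (dd κ) := 
    HasCompactSupport.of_support_subset_isCompact hκc.isCompact dd_support
  have hi1 : Integrable (fun ζ => ‖dd κ ζ‖) := (hddκ.integrable_of_hasCompactSupport hddκc).norm
  have hχi : Integrable (fun ζ : ℂ => ζ⁻¹ * χ ζ) := by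
    have := locInt_inv.integrable_smul_right_of_hasCompactSupport hχ.continuous hχc
    exact this
  refine ⟨(2 * Real.pi)⁻¹ * ((∫ ζ, ‖dd κ ζ‖) + ∫ ζ : ℂ, ‖ζ⁻¹ * χ ζ‖), by positivity, ?_⟩
  intro P S T hP hS hT
  have hw : ContDiff ℝ 1 (dd P) := dd_contDiff hP (by norm_num)
  have hp := pompeiu_zero (fun ζ => χ ζ * dd P ζ) ((hχ.of_le (by norm_num)).mul hw) hχc.mul_right
  have hS0 : 0 ≤ S := (norm_nonneg _).trans (hS 0 (by norm_num))
  have hT0 : 0 ≤ T := (norm_nonneg _).trans (hT 0 (by norm_num))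
  have e1 : ∀ ζ, dbar (fun ζ => χ ζ * dd P ζ) ζ * ζ⁻¹ = κ ζ * dd P ζ + ζ⁻¹ * χ ζ * dbar (dd P) ζ := by
    intro ζ
    rw [dbar_mul (hχ.differentiable (by simp) ζ) (hw.differentiable one_ne_zero ζ)]
    simp only [κ]; ring
  have hPd : Differentiable ℝ P := hP.differentiable (by norm_num)
  have hPf : ∀ v, Continuous fun z => fderiv ℝ P z v := fun v =>
    (hP.continuous_fderiv (by norm_num)).clm_apply continuous_const
  have hκf : ∀ v, Continuous fun z => fderiv ℝ κ z v := fun v =>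
    (hκ.continuous_fderiv (by norm_num)).clm_apply continuous_const
  have hκfc : ∀ v, HasCompactSupport fun z => fderiv ℝ κ z v := fun v => hκc.fderiv_apply ℝ v
  have ia : ∀ v, Integrable fun z => κ z * fderiv ℝ P z v := fun v =>
    (hκ.continuous.mul (hPf v)).integrable_of_hasCompactSupport hκc.mul_right
  have ib : ∀ v, Integrable fun z => fderiv ℝ κ z v * P z := fun v =>
    ((hκf v).mul hPd.continuous).integrable_of_hasCompactSupport (hκfc v).mul_right
  have ibp : ∀ v, ∫ z, κ z * fderiv ℝ P z v = - ∫ z, fderiv ℝ κ z v * P z := by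
    intro v
    exact integral_mul_fderiv_eq_neg_fderiv_mul_of_integrable (ib v) (ia v)
      ((hκ.continuous.mul hPd.continuous).integrable_of_hasCompactSupport hκc.mul_right)
      (fun x _ => hκ.differentiable one_ne_zero x) (fun x _ => hPd x)
  have e2 : ∫ z, κ z * dd P z = - ∫ z, dd κ z * P z := by
    have l1 : ∀ z, κ z * dd P z = κ z * fderiv ℝ P z 1 - Complex.I * (κ z * fderiv ℝ P z Complex.I) := by
      intro z; simp only [dd]; ring
    have l2 : ∀ z, dd κ z * P z = fderiv ℝ κ z 1 * P z - Complex.I * (fderiv ℝ κ z Complex.I * P z) := by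
      intro z; simp only [dd]; ring
    simp_rw [l1, l2]
    rw [integral_sub (ia _) ((ia _).const_mul _), integral_sub (ib _) ((ib _).const_mul _),
      integral_const_mul, integral_const_mul, ibp, ibp]
    ring
  have hi3 : Integrable fun z => κ z * dd P z := 
    (hκ.continuous.mul hw.continuous).integrable_of_hasCompactSupport hκc.mul_right
  have hi4 : Integrable fun ζ => ζ⁻¹ * χ ζ * dbar (dd P) ζ := by
    have hc : Continuous fun ζ => χ ζ * dbar (dd P) ζ :=
      hχ.continuous.mul (dbar_contDiff (m := 0) hw (by simp)).continuous
    have := locInt_inv.integrable_smul_right_of_hasCompactSupport hc hχc.mul_right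
    refine this.congr (Filter.Eventually.of_forall fun z => ?_)
    simp only [smul_eq_mul]; ring
  simp_rw [e1] at hp
  rw [integral_add hi3 hi4, e2, hχ1 0 (by norm_num), one_mul] at hp
  have b1 : ‖∫ z, dd κ z * P z‖ ≤ (∫ ζ, ‖dd κ ζ‖) * S := by
    rw [← integral_mul_const]
    refine norm_integral_le_of_norm_le (hi1.mul_const _) (Filter.Eventually.of_forall fun z => ?_)
    rw [norm_mul]
    by_cases h : ‖z‖ ≤ 1/2
    · gcongr; exact hS z h
    · have : dd κ z = 0 := by
        by_contra hne
        exact h (by simpa using hκs (dd_support hne))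
      simp [this]
  have b2 : ‖∫ ζ, ζ⁻¹ * χ ζ * dbar (dd P) ζ‖ ≤ (∫ ζ : ℂ, ‖ζ⁻¹ * χ ζ‖) * T := by
    rw [← integral_mul_const]
    refine norm_integral_le_of_norm_le (hχi.norm.mul_const _) (Filter.Eventually.of_forall fun z => ?_)
    rw [norm_mul]
    by_cases h : ‖z‖ ≤ 1/2
    · gcongr; exact hT z h
    · have : χ z = 0 := by
        by_contra hne
        exact h (by simpa using hχs (subset_tsupport _ hne))
      simp [this]
  have hn : 2 * Real.pi * ‖dd P 0‖ ≤ (∫ ζ, ‖dd κ ζ‖) * S + (∫ ζ : ℂ, ‖ζ⁻¹ * χ ζ‖) * T := by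
    have : 2 * Real.pi * ‖dd P 0‖ = ‖-(2 * (Real.pi:ℂ)) * dd P 0‖ := by
      rw [norm_mul, norm_neg, norm_mul, Complex.norm_real, Real.norm_of_nonneg Real.pi_pos.le]
      simp
    rw [this, ← hp]
    refine (norm_add_le _ _).trans ?_
    rw [norm_neg]
    exact add_le_add b1 b2
  have hA : 0 ≤ ∫ ζ, ‖dd κ ζ‖ := by positivity
  have hB : 0 ≤ ∫ ζ : ℂ, ‖ζ⁻¹ * χ ζ‖ := by positivity
  have hpi := Real.pi_pos
  rw [mul_assoc, ← div_eq_inv_mul, le_div_iff₀ (by positivity)]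
  nlinarith [mul_nonneg hA hT0, mul_nonneg hB hS0]

lemma param_prim (h hx : ℝ × ℝ → ℝ) (hc : Continuous h) (hxc : Continuous hx)
    (hd : ∀ x t, HasDerivAt (fun s => h (s, t)) (hx (x, t)) x) :
    ContDiff ℝ 1 (fun p : ℝ × ℝ => ∫ t in (0:ℝ)..p.2, h (p.1, t)) ∧
    ∀ p : ℝ × ℝ, HasFDerivAt (fun p : ℝ × ℝ => ∫ t in (0:ℝ)..p.2, h (p.1, t))
      ((∫ t in (0:ℝ)..p.2, hx (p.1, t)) • ContinuousLinearMap.fst ℝ ℝ ℝ +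
        h p • ContinuousLinearMap.snd ℝ ℝ ℝ) p := by
  have cI : Continuous fun p : ℝ × ℝ => ∫ t in (0:ℝ)..p.2, hx (p.1, t) := by
    refine intervalIntegral.continuous_parametric_intervalIntegral_of_continuous
      (f := fun (p : ℝ × ℝ) t => hx (p.1, t)) ?_ continuous_snd
    fun_prop
  have d1 : ∀ x y : ℝ, HasDerivAt (fun s => ∫ t in (0:ℝ)..y, h (s, t)) (∫ t in (0:ℝ)..y, hx (x, t)) x := by
    intro x y
    obtain ⟨K, hK⟩ := ((isCompact_closedBall x 1).prod (isCompact_uIcc (a := (0:ℝ)) (b := y))).exists_bound_of_continuousOn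
      hxc.continuousOn
    refine (intervalIntegral.hasDerivAt_integral_of_dominated_loc_of_deriv_le (F := fun s t => h (s, t))
      (F' := fun s t => hx (s, t)) (bound := fun _ => K)
      (Metric.closedBall_mem_nhds x one_pos) ?_ ?_ ?_ ?_ ?_ ?_).2
    · exact Filter.Eventually.of_forall fun s => (by fun_prop : Continuous fun t => h (s, t)).aestronglyMeasurable
    · exact (by fun_prop : Continuous fun t => h (x, t)).intervalIntegrable _ _
    · exact (by fun_prop : Continuous fun t => hx (x, t)).aestronglyMeasurable
    · exact Filter.Eventually.of_forall fun t ht s hs => hK (s, t) ⟨hs, uIoc_subset_uIcc ht⟩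
    · exact intervalIntegrable_const
    · exact Filter.Eventually.of_forall fun t _ s _ => hd s t
  have d2 : ∀ x y : ℝ, HasDerivAt (fun s => ∫ t in (0:ℝ)..s, h (x, t)) (h (x, y)) y := by
    intro x y
    exact ((by fun_prop : Continuous fun t => h (x, t)).integral_hasStrictDerivAt 0 y).hasDerivAt
  have key : ∀ p : ℝ × ℝ, HasFDerivAt (fun p : ℝ × ℝ => ∫ t in (0:ℝ)..p.2, h (p.1, t))
      ((∫ t in (0:ℝ)..p.2, hx (p.1, t)) • ContinuousLinearMap.fst ℝ ℝ ℝ +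
        h p • ContinuousLinearMap.snd ℝ ℝ ℝ) p := by
    intro p
    have := hasStrictFDerivAt_uncurry_coprod (𝕜 := ℝ) (u := p)
      (f := fun x y => ∫ t in (0:ℝ)..y, h (x, t))
      (f₁ := fun x y => ContinuousLinearMap.toSpanSingleton ℝ (∫ t in (0:ℝ)..y, hx (x, t)))
      (f₂ := fun x y => ContinuousLinearMap.toSpanSingleton ℝ (h (x, y)))
      (Filter.Eventually.of_forall fun v => (d1 v.1 v.2).hasFDerivAt)
      (Filter.Eventually.of_forall fun v => (d2 v.1 v.2).hasFDerivAt)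
      ?_ ?_
    · refine (this.hasFDerivAt : HasFDerivAt (fun p : ℝ × ℝ => ∫ t in (0:ℝ)..p.2, h (p.1, t)) _ p).congr_fderiv ?_
      ext <;> simp [Function.HasUncurry.uncurry]
    · refine Continuous.continuousAt ?_
      exact (ContinuousLinearMap.toSpanSingletonCLE (𝕜 := ℝ) (E := ℝ)).continuous.comp cI
    · refine Continuous.continuousAt ?_
      exact (ContinuousLinearMap.toSpanSingletonCLE (𝕜 := ℝ) (E := ℝ)).continuous.comp hc
  refine ⟨?_, key⟩
  rw [contDiff_one_iff_fderiv]
  refine ⟨fun p => (key p).differentiableAt, ?_⟩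
  rw [show fderiv ℝ (fun p : ℝ × ℝ => ∫ t in (0:ℝ)..p.2, h (p.1, t)) = _ from funext fun p => (key p).fderiv]
  exact (cI.smul continuous_const).add (hc.smul continuous_const)

/-- a function on the real plane seen as a complex valued function on `ℂ` -/
noncomputable def lift (g : ℝ × ℝ → ℝ) (z : ℂ) : ℂ := (g (z.re, z.im) : ℂ)

lemma lift_hasFDerivAt {g : ℝ × ℝ → ℝ} {z : ℂ} {L : ℝ × ℝ →L[ℝ] ℝ} (hg : HasFDerivAt g L (z.re, z.im)) :
    HasFDerivAt (lift g) (Complex.ofRealCLM.comp (L.comp (Complex.reCLM.prod Complex.imCLM))) z := by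
  have h1 : HasFDerivAt (fun z : ℂ => (z.re, z.im)) (Complex.reCLM.prod Complex.imCLM) z :=
    (Complex.reCLM.prod Complex.imCLM).hasFDerivAt
  exact Complex.ofRealCLM.hasFDerivAt.comp z (HasFDerivAt.comp z hg h1)

lemma lift_fderiv {g : ℝ × ℝ → ℝ} {z : ℂ} {L : ℝ × ℝ →L[ℝ] ℝ} (hg : HasFDerivAt g L (z.re, z.im)) (v : ℂ) :
    fderiv ℝ (lift g) z v = (L (v.re, v.im) : ℂ) := by
  rw [(lift_hasFDerivAt hg).fderiv]; rfl

lemma lift_contDiff {g : ℝ × ℝ → ℝ} {n : WithTop ℕ∞} (hg : ContDiff ℝ n g) : ContDiff ℝ n (lift g) := by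
  have h1 : ContDiff ℝ n (fun z : ℂ => (z.re, z.im)) := (Complex.reCLM.prod Complex.imCLM).contDiff
  exact Complex.ofRealCLM.contDiff.comp (hg.comp h1)

lemma dbar_lift_add {g k : ℝ × ℝ → ℝ} {z : ℂ} {L L' : ℝ × ℝ →L[ℝ] ℝ}
    (hg : HasFDerivAt g L (z.re, z.im)) (hk : HasFDerivAt k L' (z.re, z.im)) :
    dbar (fun z => lift g z + Complex.I * lift k z) z =
      (L (1, 0) - L' (0, 1) : ℝ) + Complex.I * (L (0, 1) + L' (1, 0) : ℝ) := by
  have h := (lift_hasFDerivAt hg).add ((lift_hasFDerivAt hk).const_mul Complex.I)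
  have e : ∀ v, fderiv ℝ (fun z => lift g z + Complex.I * lift k z) z v =
      (L (v.re, v.im) : ℂ) + Complex.I * (L' (v.re, v.im) : ℂ) := by
    intro v
    rw [show fderiv ℝ (fun z => lift g z + Complex.I * lift k z) z = _ from h.fderiv]
    simp
  rw [dbar, e, e]
  simp only [Complex.one_re, Complex.one_im, Complex.I_re, Complex.I_im]
  push_cast
  linear_combination (L' (0,1) : ℂ) * Complex.I_mul_I

section partials
variable {φ : ℝ × ℝ → ℝ}

lemma px_contDiff (hφ : ContDiff ℝ 2 φ) (v : ℝ × ℝ) : ContDiff ℝ 1 (fun p => fderiv ℝ φ p v) :=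
  (hφ.fderiv_right (m := 1) (by norm_num)).clm_apply contDiff_const

lemma slice_x {g : ℝ × ℝ → ℝ} (hg : ContDiff ℝ 1 g) (x y : ℝ) :
    HasDerivAt (fun s => g (s, y)) (fderiv ℝ g (x, y) (1, 0)) x :=
  (hg.differentiable one_ne_zero (x, y)).hasFDerivAt.comp_hasDerivAt x
    ((hasDerivAt_id x).prodMk (hasDerivAt_const x y))

lemma slice_y {g : ℝ × ℝ → ℝ} (hg : ContDiff ℝ 1 g) (x y : ℝ) :
    HasDerivAt (fun s => g (x, s)) (fderiv ℝ g (x, y) (0, 1)) y :=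
  (hg.differentiable one_ne_zero (x, y)).hasFDerivAt.comp_hasDerivAt y
    ((hasDerivAt_const y x).prodMk (hasDerivAt_id y))

lemma deriv2_x (hφ : ContDiff ℝ 2 φ) (x y : ℝ) : deriv (deriv (fun s => φ (s, y))) x =
    fderiv ℝ (fun p => fderiv ℝ φ p (1, 0)) (x, y) (1, 0) := by
  have : deriv (fun s => φ (s, y)) = fun s => fderiv ℝ φ (s, y) (1, 0) :=
    funext fun s => (slice_x (hφ.of_le (by norm_num)) s y).deriv
  rw [this]
  exact (slice_x (px_contDiff hφ _) x y).deriv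

lemma deriv2_y (hφ : ContDiff ℝ 2 φ) (x y : ℝ) : deriv (deriv (fun s => φ (x, s))) y =
    fderiv ℝ (fun p => fderiv ℝ φ p (0, 1)) (x, y) (0, 1) := by
  have : deriv (fun s => φ (x, s)) = fun s => fderiv ℝ φ (x, s) (0, 1) :=
    funext fun s => (slice_y (hφ.of_le (by norm_num)) x s).deriv
  rw [this]
  exact (slice_y (px_contDiff hφ _) x y).deriv

lemma mixed (hφ : ContDiff ℝ 2 φ) (p : ℝ × ℝ) :
    fderiv ℝ (fun p => fderiv ℝ φ p (1, 0)) p (0, 1) = fderiv ℝ (fun p => fderiv ℝ φ p (0, 1)) p (1, 0) := by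
  have hs : IsSymmSndFDerivAt ℝ φ p := hφ.contDiffAt.isSymmSndFDerivAt (by simp)
  have hd : DifferentiableAt ℝ (fderiv ℝ φ) p :=
    (hφ.fderiv_right (m := 1) (by norm_num)).differentiable one_ne_zero p
  have e : ∀ v w, fderiv ℝ (fun p => fderiv ℝ φ p v) p w = fderiv ℝ (fderiv ℝ φ) p w v := by
    intro v w
    rw [(hd.hasFDerivAt.clm_apply (hasFDerivAt_const v p)).fderiv]
    simp
  rw [e, e]
  exact hs _ _

lemma dd_lift (hφ : ContDiff ℝ 2 φ) : dd (lift φ) =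
    fun z => lift (fun p => fderiv ℝ φ p (1, 0)) z + Complex.I * lift (fun p => - fderiv ℝ φ p (0, 1)) z := by
  funext z
  have hd := (hφ.differentiable (by norm_num) (z.re, z.im)).hasFDerivAt
  rw [dd, lift_fderiv hd, lift_fderiv hd]
  simp [lift]
  ring

lemma dbar_dd_lift (hφ : ContDiff ℝ 2 φ) (z : ℂ) : dbar (dd (lift φ)) z =
    ((deriv (deriv (fun s => φ (s, z.im))) z.re + deriv (deriv (fun s => φ (z.re, s))) z.im : ℝ) : ℂ) := by
  rw [dd_lift hφ, deriv2_x hφ, deriv2_y hφ]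
  have h1 := ((px_contDiff hφ (1,0)).differentiable one_ne_zero (z.re, z.im)).hasFDerivAt
  have h2 := ((px_contDiff hφ (0,1)).differentiable one_ne_zero (z.re, z.im)).hasFDerivAt
  rw [dbar_lift_add h1 h2.fun_neg]
  simp only [neg_apply]
  rw [mixed hφ]
  simp

end partials

lemma grad_bound' : ∃ C : ℝ, 0 ≤ C ∧ ∀ (P : ℂ → ℂ) (S T : ℝ) (a : ℂ), ContDiff ℝ 2 P →
    (∀ z, ‖z‖ ≤ 1/2 → ‖P (a + z)‖ ≤ S) → (∀ z, ‖z‖ ≤ 1/2 → ‖dbar (dd P) (a + z)‖ ≤ T) →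
    ‖dd P a‖ ≤ C * (S + T) := by
  obtain ⟨C, hC, h⟩ := grad_bound
  refine ⟨C, hC, fun P S T a hP hS hT => ?_⟩
  have e1 : dd (fun z => P (a + z)) = fun z => dd P (a + z) := by
    funext z; simp only [dd, fderiv_comp_add_left]
  have e2 : ∀ z, dbar (fun z => dd P (a + z)) z = dbar (dd P) (a + z) := by
    intro z; simp only [dbar, fderiv_comp_add_left]
  have := h (fun z => P (a + z)) S T (hP.comp (contDiff_const.add contDiff_id)) hS
    (by intro z hz; rw [e1, e2]; exact hT z hz)
  rw [e1] at this
  simpa using this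

lemma exists_conj (M : ℝ) (hM : 1 ≤ M) : ∃ C₁ : ℝ, 0 ≤ C₁ ∧ ∀ (V b : ℝ → ℝ) (φ : ℝ × ℝ → ℝ) (S : ℝ),
    (∀ x, 1 ≤ V x) → (∀ x, V x ≤ M) → ContDiff ℝ 1 b →
    (∀ x ∈ Icc (-6:ℝ) 6, 0 ≤ b x ∧ b x ≤ M + 1 ∧ HasDerivAt b (V x - b x ^ 2) x) →
    ContDiff ℝ 2 φ →
    (∀ x y : ℝ, -(deriv (deriv (fun s => φ (s, y))) x + deriv (deriv (fun s => φ (x, s))) y)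
            + V x * φ (x, y) = 0) →
    (∀ x : ℝ, deriv (fun s => φ (x, s)) 0 = 0) →
    (∀ x ∈ Icc (-1:ℝ) 2, ∀ y ∈ Icc (-(3/2):ℝ) (3/2), |φ (x, y)| ≤ S) →
    ∃ f : ℂ → ℂ, ContDiff ℝ 1 f ∧ (∀ z : ℂ, z.re ∈ Icc (-6:ℝ) 6 → dbar f z = b z.re * (starRingEnd ℂ) (f z)) ∧
      (∀ z : ℂ, |φ (z.re, z.im)| ≤ ‖f z‖) ∧ (∀ x : ℝ, ‖f x‖ = |φ (x, 0)|) ∧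
      ∀ z ∈ rectU, ‖f z‖ ≤ C₁ * S := by
  obtain ⟨C, hC, hgrad⟩ := grad_bound'
  refine ⟨1 + (C * (1 + M) + (M + 1)), by positivity, ?_⟩
  intro V b φ S hV1 hVM hb hbR hφ hpde hneu hS
  have hφ1 : ContDiff ℝ 1 φ := hφ.of_le (by norm_num)
  have hS0 : 0 ≤ S := (abs_nonneg _).trans (hS 0 (by norm_num) 0 (by norm_num))
  let px : ℝ × ℝ → ℝ := fun p => fderiv ℝ φ p (1, 0)
  let py : ℝ × ℝ → ℝ := fun p => fderiv ℝ φ p (0, 1)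
  have hpx : ContDiff ℝ 1 px := px_contDiff hφ _
  have hpy : ContDiff ℝ 1 py := px_contDiff hφ _
  let h : ℝ × ℝ → ℝ := fun p => px p - b p.1 * φ p
  have hh : ContDiff ℝ 1 h := hpx.sub ((hb.comp contDiff_fst).mul hφ1)
  let hx : ℝ × ℝ → ℝ := fun p => fderiv ℝ h p (1, 0)
  have hhx : Continuous hx := (hh.continuous_fderiv one_ne_zero).clm_apply continuous_const
  obtain ⟨hq, hqd⟩ := param_prim h hx hh.continuous hhx (fun x t => slice_x hh x t)
  set q : ℝ × ℝ → ℝ := fun p => ∫ t in (0:ℝ)..p.2, h (p.1, t) with hqdef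
  have hq0 : ∀ x, q (x, 0) = 0 := by intro x; simp [q]
  have hpy0 : ∀ x, py (x, 0) = 0 := by
    intro x
    exact (slice_y hφ1 x 0).deriv.symm.trans (hneu x)
  have hlap : ∀ x y, fderiv ℝ px (x, y) (1, 0) + fderiv ℝ py (x, y) (0, 1) = V x * φ (x, y) := by
    intro x y
    have := hpde x y
    rw [deriv2_x hφ, deriv2_y hφ] at this
    simp only [px, py]
    linarith
  have hhxe : ∀ x ∈ Icc (-6:ℝ) 6, ∀ y, hx (x, y) = - fderiv ℝ py (x, y) (0, 1) - b x * h (x, y) := by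
    intro x hx6 y
    have d1 := slice_x hpx x y
    have d2 := slice_x hφ1 x y
    have d3 := (d1.sub ((hbR x hx6).2.2.mul d2)).unique (slice_x hh x y)
    have := hlap x y
    change fderiv ℝ h (x, y) (1, 0) = _
    rw [← d3]
    simp only [h, px]
    linear_combination this
  have hqx : ∀ x ∈ Icc (-6:ℝ) 6, ∀ y, ∫ t in (0:ℝ)..y, hx (x, t) = - py (x, y) - b x * q (x, y) := by
    intro x hx6 y
    have c1 : Continuous fun t => fderiv ℝ py (x, t) (0, 1) :=
      ((hpy.continuous_fderiv one_ne_zero).clm_apply continuous_const).comp (by fun_prop : Continuous fun t : ℝ => (x, t))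
    have c2 : Continuous fun t => h (x, t) := hh.continuous.comp (by fun_prop : Continuous fun t : ℝ => (x, t))
    simp_rw [hhxe x hx6]
    have c3 : Continuous fun t => - fderiv ℝ py (x, t) (0, 1) := c1.neg
    have c4 : Continuous fun t => b x * h (x, t) := continuous_const.mul c2
    rw [intervalIntegral.integral_sub (c3.intervalIntegrable _ _) (c4.intervalIntegrable _ _),
      intervalIntegral.integral_neg, intervalIntegral.integral_const_mul,
      intervalIntegral.integral_eq_sub_of_hasDerivAt (f := fun t => py (x, t)) (fun t _ => slice_y hpy x t) (c1.intervalIntegrable _ _),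
      hpy0, sub_zero]
  refine ⟨fun z => lift φ z + Complex.I * lift q z, (lift_contDiff hφ1).add (contDiff_const.mul (lift_contDiff hq)), ?_, ?_, ?_, ?_⟩
  · intro z hz
    rw [dbar_lift_add (hφ1.differentiable one_ne_zero _).hasFDerivAt (hqd (z.re, z.im))]
    simp only [add_apply, smul_apply, ContinuousLinearMap.coe_fst', ContinuousLinearMap.coe_snd', smul_eq_mul, mul_zero, mul_one, zero_add, add_zero]
    rw [hqx z.re hz]
    simp only [lift, h, px, py]
    push_cast
    simp only [map_add, map_mul, Complex.conj_I, Complex.conj_ofReal]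
    ring
  · intro z
    have : φ (z.re, z.im) = (lift φ z + Complex.I * lift q z).re := by simp [lift]
    rw [this]
    exact Complex.abs_re_le_norm _
  · intro x
    simp [lift, hq0]
  · intro z hz
    have hz1 : z.re ∈ Ioo (-1/2 : ℝ) (3/2) := hz.1
    have hz2 : z.im ∈ Ioo (-1 : ℝ) 1 := hz.2
    have hφS : |φ (z.re, z.im)| ≤ S := hS _ ⟨by linarith [hz1.1], by linarith [hz1.2]⟩ _ ⟨by linarith [hz2.1], by linarith [hz2.2]⟩
    have hgb : ∀ t ∈ Ioo (-1:ℝ) 1, |px (z.re, t)| ≤ C * (S + M * S) := by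
      intro t ht
      have hin : ∀ w : ℂ, ‖w‖ ≤ 1/2 → |φ ((⟨z.re, t⟩ + w : ℂ).re, (⟨z.re, t⟩ + w : ℂ).im)| ≤ S := by
        intro w hw
        have h1 := abs_le.1 ((Complex.abs_re_le_norm w).trans hw)
        have h2 := abs_le.1 ((Complex.abs_im_le_norm w).trans hw)
        refine hS _ ⟨?_, ?_⟩ _ ⟨?_, ?_⟩ <;> simp only [Complex.add_re, Complex.add_im]
        · linarith [hz1.1, h1.1]
        · linarith [hz1.2, h1.2]
        · linarith [ht.1, h2.1]
        · linarith [ht.2, h2.2]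
      have := hgrad (lift φ) S (M * S) ⟨z.re, t⟩ (lift_contDiff hφ) (by
        intro w hw
        simpa [lift] using hin w hw) (by
        intro w hw
        rw [dbar_dd_lift hφ]
        have h3 := hpde (⟨z.re, t⟩ + w : ℂ).re (⟨z.re, t⟩ + w : ℂ).im
        rw [(show ∀ a b : ℝ, -a + b = 0 → a = b from fun a b h => by linarith) _ _ h3]
        rw [Complex.norm_real, Real.norm_eq_abs, abs_mul]
        have h4 := hin w hw
        have h5 : |V (⟨z.re, t⟩ + w : ℂ).re| ≤ M := by
          rw [abs_of_nonneg (by linarith [hV1 (⟨z.re, t⟩ + w : ℂ).re])]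
          exact hVM _
        gcongr)
      refine le_trans ?_ this
      rw [dd_lift hφ]
      have e : px (z.re, t) = (lift (fun p => fderiv ℝ φ p (1, 0)) ⟨z.re, t⟩ + Complex.I * lift (fun p => - fderiv ℝ φ p (0, 1)) ⟨z.re, t⟩).re := by
        simp [lift, px]
      rw [e]
      exact Complex.abs_re_le_norm _
    have hhb : ∀ t ∈ Ioo (-1:ℝ) 1, |h (z.re, t)| ≤ C * (S + M * S) + (M + 1) * S := by
      intro t ht
      have h1 := hgb t ht
      have h2 : |φ (z.re, t)| ≤ S := hS _ ⟨by linarith [hz1.1], by linarith [hz1.2]⟩ _ ⟨by linarith [ht.1], by linarith [ht.2]⟩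
      obtain ⟨h3, h4, -⟩ := hbR z.re ⟨by linarith [hz1.1], by linarith [hz1.2]⟩
      refine (abs_sub _ _).trans ?_
      rw [abs_mul, abs_of_nonneg h3]
      gcongr
    have hqb : |q (z.re, z.im)| ≤ C * (S + M * S) + (M + 1) * S := by
      have := intervalIntegral.norm_integral_le_of_norm_le_const (a := 0) (b := z.im) (f := fun t => h (z.re, t))
        (C := C * (S + M * S) + (M + 1) * S) (by
          intro t ht
          apply hhb
          have := uIoc_subset_uIcc ht
          rw [mem_uIcc] at this
          rcases this with ⟨h1, h2⟩ | ⟨h1, h2⟩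
          · exact ⟨by linarith, by linarith [hz2.2]⟩
          · exact ⟨by linarith [hz2.1], by linarith⟩)
      refine this.trans ?_
      rw [sub_zero]
      have h1 : |z.im| ≤ 1 := abs_le.2 ⟨hz2.1.le, hz2.2.le⟩
      have h2 : 0 ≤ C * (S + M * S) + (M + 1) * S := by positivity
      nlinarith
    refine (norm_add_le _ _).trans ?_
    simp only [lift, norm_mul, Complex.norm_I, one_mul, Complex.norm_real, Real.norm_eq_abs]
    linarith

lemma rectU_norm {z : ℂ} (hz : z ∈ rectU) : ‖z‖ ≤ 4 := by
  have hz1 : z.re ∈ Ioo (-1/2 : ℝ) (3/2) := hz.1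
  have hz2 : z.im ∈ Ioo (-1 : ℝ) 1 := hz.2
  have h1 : |z.re| ≤ 3/2 := abs_le.2 ⟨by linarith [hz1.1], by linarith [hz1.2]⟩
  have h2 : |z.im| ≤ 1 := abs_le.2 ⟨by linarith [hz2.1], by linarith [hz2.2]⟩
  linarith [Complex.norm_le_abs_re_add_abs_im z]

lemma similarity (N : ℝ) (hN : 0 ≤ N) : ∃ C₂ : ℝ, 0 ≤ C₂ ∧ ∀ (f : ℂ → ℂ) (b : ℝ → ℝ), ContDiff ℝ 1 f →
    ContDiff ℝ 1 b → (∀ x ∈ Icc (-6:ℝ) 6, |b x| ≤ N) →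
    (∀ z : ℂ, z.re ∈ Icc (-6:ℝ) 6 → dbar f z = b z.re * (starRingEnd ℂ) (f z)) → ∀ η > 0,
    ∃ G : ℂ → ℂ, DifferentiableOn ℂ G rectU ∧ ∀ z, ‖z‖ ≤ 6 → 
      ‖G z‖ ≤ Real.exp C₂ * ‖f z‖ + η ∧ ‖f z‖ ≤ Real.exp C₂ * (‖G z‖ + η) := by
  obtain ⟨C, hC, hsol⟩ := exists_dbar_solution
  obtain ⟨χ, hχ, hχ1, hχs, hχb⟩ := exists_cutoff 4 5 (by norm_num) (by norm_num)
  refine ⟨C * N, by positivity, ?_⟩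
  intro f b hf hb hbN hfb η hη
  let K := C * (Real.exp (C * N) * N)
  have hK : 0 ≤ K := by positivity
  let τ := η / (K + 1)
  have hτ : 0 < τ := by positivity
  have hKτ : K * τ ≤ η := by
    have : (K + 1) * τ = η := by simp only [τ]; field_simp
    nlinarith
  let fc : ℂ → ℂ := fun z => (starRingEnd ℂ) (f z)
  have hfc : ContDiff ℝ 1 fc := Complex.conjCLE.contDiff.comp hf
  let D : ℂ → ℂ := fun z => f z * fc z + (τ:ℂ) ^ 2
  have hDe : ∀ z, D z = ((‖f z‖ ^ 2 + τ ^ 2 : ℝ) : ℂ) := by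
    intro z
    simp only [D, fc, Complex.mul_conj, Complex.normSq_eq_norm_sq]
    push_cast; ring
  have hDpos : ∀ z, 0 < ‖f z‖ ^ 2 + τ ^ 2 := fun z => by positivity
  have hD0 : ∀ z, D z ≠ 0 := fun z => by
    rw [hDe]; exact_mod_cast (hDpos z).ne'
  have hDn : ∀ z, ‖D z‖ = ‖f z‖ ^ 2 + τ ^ 2 := fun z => by
    rw [hDe, Complex.norm_real, Real.norm_of_nonneg (hDpos z).le]
  have hD : ContDiff ℝ 1 D := (hf.mul hfc).add contDiff_const
  let bb : ℂ → ℂ := fun z => (b z.re : ℂ)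
  have hbb : ContDiff ℝ 1 bb := Complex.ofRealCLM.contDiff.comp (hb.comp Complex.reCLM.contDiff)
  have hχ' : ContDiff ℝ 1 χ := hχ.of_le (by norm_num)
  have hχ5 : ∀ z, χ z ≠ 0 → ‖z‖ ≤ 5 := fun z hz => by simpa using hχs (subset_tsupport _ hz)
  have hfcn : ∀ z, ‖fc z‖ = ‖f z‖ := fun z => by simp [fc]
  have hre : ∀ z : ℂ, ‖z‖ ≤ 6 → z.re ∈ Icc (-6:ℝ) 6 := fun z hz =>
    abs_le.1 ((Complex.abs_re_le_norm z).trans hz)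
  have hbbn : ∀ z, ‖z‖ ≤ 6 → ‖bb z‖ ≤ N := by
    intro z hz
    simp only [bb, Complex.norm_real, Real.norm_eq_abs]
    exact hbN _ (hre z hz)
  let g : ℂ → ℂ := fun z => χ z * bb z * (fc z ^ 2 * (D z)⁻¹)
  have hg : ContDiff ℝ 1 g := (hχ'.mul hbb).mul ((hfc.pow 2).mul (hD.inv hD0))
  obtain ⟨s, hs, hsd, hsb⟩ := hsol g N hg (by
    intro z hz
    have : χ z ≠ 0 := fun h => hz (by simp [g, h])
    linarith [hχ5 z this]) (by
    intro z
    by_cases h : χ z = 0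
    · simp [g, h, hN]
    have h5 := hχ5 z h
    have h1 := hbbn z (by linarith)
    have h2 := hχb z
    have h3 : ‖fc z ^ 2 * (D z)⁻¹‖ ≤ 1 := by
      rw [norm_mul, norm_pow, norm_inv, hDn, hfcn, ← div_eq_mul_inv, div_le_one (hDpos z)]
      nlinarith
    simp only [g]
    rw [norm_mul, norm_mul]
    calc ‖χ z‖ * ‖bb z‖ * ‖fc z ^ 2 * (D z)⁻¹‖ ≤ 1 * N * 1 := by gcongr
      _ = N := by ring)
  let E : ℂ → ℂ := fun z => Complex.exp (- s z)
  have hE : ContDiff ℝ 1 E := hs.neg.cexp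
  have hEd : ∀ z, dbar E z = - E z * g z := by
    intro z
    have h1 : HasFDerivAt E (Complex.exp (- s z) • (-(fderiv ℝ s z))) z :=
      ((hs.differentiable one_ne_zero z).hasFDerivAt.neg).cexp
    rw [← hsd z, dbar, dbar, h1.fderiv]
    simp only [smul_apply, neg_apply, smul_eq_mul, E]
    ring
  have hEn : ∀ z, ‖z‖ ≤ 6 → ‖E z‖ ≤ Real.exp (C * N) ∧ ‖(E z)⁻¹‖ ≤ Real.exp (C * N) := by
    intro z hz
    have := abs_le.1 ((Complex.abs_re_le_norm _).trans (hsb z hz))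
    simp only [E, ← Complex.exp_neg, Complex.norm_exp, Real.exp_le_exp, Complex.neg_re]
    constructor <;> linarith [this.1, this.2]
  let g2 : ℂ → ℂ := fun z => χ z * E z * bb z * fc z * ((τ:ℂ) ^ 2 * (D z)⁻¹)
  have hg2 : ContDiff ℝ 1 g2 :=
    (((hχ'.mul hE).mul hbb).mul hfc).mul (contDiff_const.mul (hD.inv hD0))
  obtain ⟨T, hT, hTd, hTb⟩ := hsol g2 (Real.exp (C * N) * N * τ) hg2 (by
    intro z hz
    have : χ z ≠ 0 := fun h => hz (by simp [g2, h])
    linarith [hχ5 z this]) (by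
    intro z
    by_cases h : χ z = 0
    · simp only [g2, h, zero_mul, norm_zero]; positivity
    have h5 := hχ5 z h
    have h1 := hbbn z (by linarith)
    have h2 := hχb z
    have h4 := (hEn z (by linarith)).1
    have h3 : ‖fc z * ((τ:ℂ) ^ 2 * (D z)⁻¹)‖ ≤ τ := by
      rw [norm_mul, norm_mul, norm_pow, norm_inv, hDn, hfcn, Complex.norm_real, Real.norm_of_nonneg hτ.le,
        ← mul_assoc, ← div_eq_mul_inv, div_le_iff₀ (hDpos z)]
      nlinarith [sq_nonneg (‖f z‖ - τ), norm_nonneg (f z), mul_nonneg hτ.le (sq_nonneg (‖f z‖ - τ)), mul_nonneg hτ.le (mul_nonneg hτ.le (norm_nonneg (f z)))]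
    simp only [g2]
    rw [mul_assoc _ (fc z), norm_mul, norm_mul, norm_mul]
    calc ‖χ z‖ * ‖E z‖ * ‖bb z‖ * ‖fc z * ((τ:ℂ) ^ 2 * (D z)⁻¹)‖ ≤ 1 * Real.exp (C * N) * N * τ := by gcongr
      _ = Real.exp (C * N) * N * τ := by ring)
  have hTη : ∀ z, ‖z‖ ≤ 6 → ‖T z‖ ≤ η := fun z hz => (hTb z hz).trans (by
    calc C * (Real.exp (C * N) * N * τ) = K * τ := by simp only [K]; ring
      _ ≤ η := hKτ)
  refine ⟨fun z => E z * f z - T z, ?_, ?_⟩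
  · intro z hz
    refine DifferentiableAt.differentiableWithinAt ?_
    have hz4 := rectU_norm hz
    have dE := hE.differentiable one_ne_zero z
    have df := hf.differentiable one_ne_zero z
    have dT := hT.differentiable one_ne_zero z
    rw [differentiableAt_complex_iff_differentiableAt_real]
    refine ⟨(dE.mul df).sub dT, ?_⟩
    have hz0 : dbar (fun z => E z * f z - T z) z = 0 := by
      have e1 : dbar (fun z => E z * f z - T z) z = dbar (fun z => E z * f z) z - dbar T z := by
        simp only [dbar]
        rw [fderiv_fun_sub (dE.fun_mul df) dT]
        simp only [sub_apply]; ring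
      rw [e1, dbar_mul dE df, hEd, hTd, hfb z (hre z (by linarith))]
      simp only [g, g2, hχ1 z hz4]
      have e2 : (starRingEnd ℂ) (f z) = fc z := rfl
      have e3 : (b z.re : ℂ) = bb z := rfl
      rw [e2, e3]
      have hd : D z * (D z)⁻¹ = 1 := mul_inv_cancel₀ (hD0 z)
      have e4 : D z = f z * fc z + (τ:ℂ) ^ 2 := rfl
      generalize (D z)⁻¹ = Y at *
      rw [e4] at hd
      linear_combination (-(E z * bb z * fc z)) * hd
    rw [dbar] at hz0
    rw [smul_eq_mul]
    linear_combination (-Complex.I) * hz0 + (fderiv ℝ (fun z => E z * f z - T z) z Complex.I) * Complex.I_mul_I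
  · intro z hz
    obtain ⟨h1, h2⟩ := hEn z hz
    have h3 := hTη z hz
    constructor
    · refine (norm_sub_le _ _).trans ?_
      rw [norm_mul]; gcongr
    · have : f z = (E z)⁻¹ * ((E z * f z - T z) + T z) := by
        have : E z ≠ 0 := Complex.exp_ne_zero _
        field_simp; ring
      conv_lhs => rw [this]
      rw [norm_mul]
      gcongr
      exact (norm_add_le _ _).trans (by gcongr)

lemma unit_cell (M m : ℝ) (hM : 1 ≤ M) (hm : 0 < m) : ∃ K A : ℝ, 0 ≤ K ∧ 0 ≤ A ∧
    ∀ (V : ℝ → ℝ) (φ : ℝ × ℝ → ℝ) (S : ℝ) (ω : Set ℝ), Continuous V →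
    (∀ x, 1 ≤ V x) → (∀ x, V x ≤ M) → ContDiff ℝ 2 φ →
    (∀ x y : ℝ, -(deriv (deriv (fun s => φ (s, y))) x + deriv (deriv (fun s => φ (x, s))) y)
            + V x * φ (x, y) = 0) →
    (∀ x : ℝ, deriv (fun s => φ (x, s)) 0 = 0) →
    (∀ x ∈ Icc (-1:ℝ) 2, ∀ y ∈ Icc (-(3/2):ℝ) (3/2), |φ (x, y)| ≤ S) →
    MeasurableSet ω → ω ⊆ Icc 0 1 → volume ω = ENNReal.ofReal m →
    ∀ x ∈ Icc (0:ℝ) 1, ∀ y ∈ Icc (-(1/2):ℝ) (1/2), ∀ n : ℕ,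
      |φ (x, y)| ≤ K * (Real.sqrt (∫ x in ω, (φ (x, 0)) ^ 2) * A ^ n + S * (1/2) ^ n) := by
  obtain ⟨K₀, A, hK₀, hA, hholo⟩ := holo_estimate (m/2) (by positivity)
  obtain ⟨C₁, hC₁, hconj⟩ := exists_conj M hM
  obtain ⟨C₂, hC₂, hsim⟩ := similarity (M+1) (by linarith)
  set e := Real.exp C₂ with he
  have he0 : 0 < e := Real.exp_pos _
  set r := Real.sqrt (2 / m) with hr
  have hr0 : 0 ≤ r := Real.sqrt_nonneg _
  refine ⟨e * (K₀ * (e * (r + C₁))), A, by positivity, hA, ?_⟩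
  intro V φ S ω hVc hV1 hVM hφ hpde hneu hS hωm hω hωv x hx y hy n
  obtain ⟨b, hb, hbR⟩ := exists_riccati M hM V hVc hV1 hVM
  obtain ⟨f, hf, hfb, hf1, hf2, hf3⟩ := hconj V b φ S hV1 hVM hb hbR hφ hpde hneu hS
  have hS0 : 0 ≤ S := (abs_nonneg _).trans (hS 0 (by norm_num) 0 (by norm_num))
  set δ := Real.sqrt (∫ x in ω, (φ (x, 0)) ^ 2) with hδ
  have hδ0 : 0 ≤ δ := Real.sqrt_nonneg _
  have hI0 : 0 ≤ ∫ x in ω, (φ (x, 0)) ^ 2 := by positivity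
  have hδ2 : δ ^ 2 = ∫ x in ω, (φ (x, 0)) ^ 2 := Real.sq_sqrt hI0
  have hcont : Continuous fun x : ℝ => (φ (x, 0)) ^ 2 := (hφ.continuous.comp (by fun_prop : Continuous fun x : ℝ => (x, (0:ℝ)))).pow 2
  have hintg : IntegrableOn (fun x : ℝ => (φ (x, 0)) ^ 2) ω :=
    (hcont.continuousOn.integrableOn_compact isCompact_Icc).mono_set hω
  -- the good set
  have hgood : ∀ η > 0, ∃ ω' ⊆ Icc (0:ℝ) 1, ENNReal.ofReal (m/2) ≤ volume ω' ∧ ∀ x ∈ ω', |φ (x, 0)| ≤ r * δ + η := by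
    intro η hη
    set δ₁ := r * δ + η with hδ₁
    have hδ₁0 : 0 < δ₁ := by positivity
    refine ⟨ω \ {x | δ₁ ^ 2 ≤ φ (x, 0) ^ 2}, sdiff_subset.trans hω, ?_, ?_⟩
    · have hmeas : MeasurableSet {x : ℝ | δ₁ ^ 2 ≤ φ (x, 0) ^ 2} := (isClosed_le continuous_const hcont).measurableSet
      have hch := mul_meas_ge_le_integral_of_nonneg (μ := volume.restrict ω) (f := fun x : ℝ => (φ (x, 0)) ^ 2)
        (Filter.Eventually.of_forall fun x => sq_nonneg _) hintg (δ₁ ^ 2)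
      rw [← hδ2, measureReal_restrict_apply hmeas] at hch
      have hvr : volume.real ω = m := by
        rw [measureReal_def, hωv, ENNReal.toReal_ofReal hm.le]
      have hfin : volume ω ≠ ⊤ := by rw [hωv]; exact ENNReal.ofReal_ne_top
      have hd : δ ^ 2 ≤ δ₁ ^ 2 * (m / 2) := by
        have h1 : r * δ ≤ δ₁ := by linarith
        have h2 : (r * δ) ^ 2 ≤ δ₁ ^ 2 := by gcongr
        rw [mul_pow, hr, Real.sq_sqrt (by positivity)] at h2
        calc δ ^ 2 = (2 / m * δ ^ 2) * (m / 2) := by field_simp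
          _ ≤ _ := by gcongr
      have hB : volume.real ({x : ℝ | δ₁ ^ 2 ≤ φ (x, 0) ^ 2} ∩ ω) ≤ m / 2 := by
        have := hch.trans hd
        exact le_of_mul_le_mul_left this (by positivity)
      have hsum := measureReal_sdiff_add_inter (μ := volume) (s := ω) hmeas hfin
      rw [inter_comm, hvr] at hsum
      have : m / 2 ≤ volume.real (ω \ {x | δ₁ ^ 2 ≤ φ (x, 0) ^ 2}) := by linarith
      refine (ENNReal.ofReal_le_ofReal this).trans ?_
      rw [measureReal_def]
      exact ENNReal.ofReal_toReal_le
    · rintro x ⟨_, hx⟩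
      simp only [mem_ofPred_eq, not_le] at hx
      exact (abs_lt_of_sq_lt_sq hx hδ₁0.le).le
  have hnear : ∀ z : ℂ, z.re ∈ Icc (0:ℝ) 1 → z.im ∈ Icc (-(1/2):ℝ) (1/2) → z ∈ rectU := by
    intro z h1 h2
    exact ⟨⟨by linarith [h1.1], by linarith [h1.2]⟩, ⟨by linarith [h2.1], by linarith [h2.2]⟩⟩
  -- the estimate with an arbitrary error
  have hmain : ∀ η > 0, |φ (x, y)| ≤ e * (K₀ * (e * (r + C₁))) * (δ * A ^ n + S * (1/2) ^ n) +
      η * (e * (K₀ * ((e + 1) * A ^ n + (1/2) ^ n) + 1)) := by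
    intro η hη
    obtain ⟨G, hG, hGb⟩ := hsim f b hf hb (fun x hx => by
      rw [abs_of_nonneg (hbR x hx).1]; exact (hbR x hx).2.1) hfb η hη
    obtain ⟨ω', hω', hv', hδ'⟩ := hgood η hη
    have hGz := hholo G (e * (C₁ * S) + η) (e * (r * δ + η) + η) ω' hG (by positivity) (by
      intro z hz
      refine (hGb z (by linarith [rectU_norm hz])).1.trans ?_
      have := hf3 z hz
      gcongr) hω' hv' (by
      intro t ht
      have htU : (t : ℂ) ∈ rectU := hnear t (by simpa using hω' ht) (by simp)
      refine (hGb t (by linarith [rectU_norm htU])).1.trans ?_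
      rw [hf2]
      have := hδ' t ht
      gcongr) ⟨x, y⟩ hx hy n
    have hzU : (⟨x, y⟩ : ℂ) ∈ rectU := hnear ⟨x, y⟩ hx hy
    have h1 := hf1 ⟨x, y⟩
    have h2 := (hGb ⟨x, y⟩ (by linarith [rectU_norm hzU])).2
    simp only at h1
    have hAn : 0 ≤ A ^ n := by positivity
    have hBn : (0:ℝ) ≤ (1/2) ^ n := by positivity
    calc |φ (x, y)| ≤ e * (‖G ⟨x, y⟩‖ + η) := h1.trans h2
      _ ≤ e * (K₀ * ((e * (r * δ + η) + η) * A ^ n + (e * (C₁ * S) + η) * (1/2) ^ n) + η) := by gcongr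
      _ = e * (K₀ * (e * (r * (δ * A ^ n) + C₁ * (S * (1/2) ^ n)))) +
          η * (e * (K₀ * ((e + 1) * A ^ n + (1/2) ^ n) + 1)) := by ring
      _ ≤ e * (K₀ * (e * ((r + C₁) * (δ * A ^ n) + (r + C₁) * (S * (1/2) ^ n)))) +
          η * (e * (K₀ * ((e + 1) * A ^ n + (1/2) ^ n) + 1)) := by
          gcongr <;> linarith
      _ = _ := by ring
  set Q := e * (K₀ * ((e + 1) * A ^ n + (1/2) ^ n) + 1) with hQ
  have hQ0 : 0 < Q := by positivity
  refine le_of_forall_pos_le_add fun ε hε => ?_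
  have := hmain (ε / Q) (by positivity)
  rwa [div_mul_cancel₀ _ hQ0.ne'] at this

/-- **L² propagation of smallness for `-Δφ + V(x)φ = 0` with Neumann condition on `{y = 0}`.**
For `V` continuous, bounded, with `V ≥ 1`, and `ω ⊆ [ℓ, ℓ+1]` measurable with `|ω| = m > 0`,
there are `α ∈ (0,1)` and `C > 0`, depending only on `V` and `m`, such that every real-valued
`H²_loc` solution `φ` of `-Δφ + V(x)φ = 0` on `ℝ²` with `∂_y φ(x,0) = 0` satisfies
`‖φ‖_{L²(D₁ℓ)} ≤ C ‖φ(·,0)‖_{L²(ω)}^α (sup_{D₂ℓ}|φ|)^{1-α}`,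
where `D₁ℓ = [ℓ,ℓ+1] × [-1/2,1/2]` and `D₂ℓ = [ℓ-1,ℓ+2] × [-3/2,3/2]`. -/
theorem l2_propagation_neumann
    (V : ℝ → ℝ) (hVcont : Continuous V) (hVbdd : ∃ M : ℝ, ∀ x : ℝ, |V x| ≤ M)
    (hV1 : ∀ x : ℝ, 1 ≤ V x) (m : ℝ) (hm : 0 < m) :
    ∃ α : ℝ, α ∈ Ioo (0 : ℝ) 1 ∧ ∃ C > 0,
      ∀ ℓ : ℤ, ∀ ω : Set ℝ, MeasurableSet ω → ω ⊆ Icc (ℓ : ℝ) ((ℓ : ℝ) + 1) →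
        volume ω = ENNReal.ofReal m →
      ∀ φ : ℝ × ℝ → ℝ, ContDiff ℝ 2 φ →
        (∀ x y : ℝ,
          -(deriv (deriv (fun s => φ (s, y))) x + deriv (deriv (fun s => φ (x, s))) y)
            + V x * φ (x, y) = 0) →
        (∀ x : ℝ, deriv (fun s => φ (x, s)) 0 = 0) →
        Real.sqrt (∫ z in Icc (ℓ : ℝ) ((ℓ : ℝ) + 1) ×ˢ Icc (-(1/2) : ℝ) (1/2), (φ z) ^ 2) ≤
          C * Real.sqrt (∫ x in ω, (φ (x, 0)) ^ 2) ^ α *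
            (⨆ z ∈ (Icc ((ℓ : ℝ) - 1) ((ℓ : ℝ) + 2) ×ˢ Icc (-(3/2) : ℝ) (3/2)), |φ z|)
              ^ (1 - α) := by
  obtain ⟨M₀, hM₀⟩ := hVbdd
  set M := max M₀ 1 with hMdef
  have hM : 1 ≤ M := le_max_right _ _
  have hVM : ∀ x, V x ≤ M := fun x => (le_abs_self _).trans ((hM₀ x).trans (le_max_left _ _))
  obtain ⟨K, A, hK, hA, hcell⟩ := unit_cell M m hM hm
  obtain ⟨α, hα, C₀, hC₀, hopt⟩ := optimise A hA
  refine ⟨α, hα, (K + 1) * C₀, by positivity, ?_⟩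
  intro ℓ ω hωm hω hωv φ hφ hpde hneu
  set S := ⨆ z ∈ (Icc ((ℓ : ℝ) - 1) ((ℓ : ℝ) + 2) ×ˢ Icc (-(3/2) : ℝ) (3/2)), |φ z| with hSdef
  have hS : ∀ z ∈ (Icc ((ℓ : ℝ) - 1) ((ℓ : ℝ) + 2) ×ˢ Icc (-(3/2) : ℝ) (3/2)), |φ z| ≤ S := by
    obtain ⟨B, hB⟩ := (isCompact_Icc.prod isCompact_Icc :
      IsCompact (Icc ((ℓ : ℝ) - 1) ((ℓ : ℝ) + 2) ×ˢ Icc (-(3/2) : ℝ) (3/2))).exists_bound_of_continuousOn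
      hφ.continuous.continuousOn
    intro z hz
    have hB0 : 0 ≤ B := (norm_nonneg _).trans (hB z hz)
    have hbdd : BddAbove (range fun z : ℝ × ℝ =>
        ⨆ (_ : z ∈ (Icc ((ℓ : ℝ) - 1) ((ℓ : ℝ) + 2) ×ˢ Icc (-(3/2) : ℝ) (3/2))), |φ z|) := by
      refine ⟨B, ?_⟩
      rintro _ ⟨w, rfl⟩
      exact Real.iSup_le (fun hw => hB w hw) hB0
    have h1 := le_ciSup hbdd z
    have h2 : (⨆ (_ : z ∈ (Icc ((ℓ : ℝ) - 1) ((ℓ : ℝ) + 2) ×ˢ Icc (-(3/2) : ℝ) (3/2))), |φ z|) = |φ z| :=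
      ciSup_pos hz
    simp only [h2] at h1
    exact h1
  have hS0 : 0 ≤ S := Real.iSup_nonneg fun z => Real.iSup_nonneg fun _ => abs_nonneg _
  set δ := Real.sqrt (∫ x in ω, (φ (x, 0)) ^ 2) with hδ
  have hδ0 : 0 ≤ δ := Real.sqrt_nonneg _
  have hvol1 : volume.real ω ≤ 1 := by
    have : volume ω ≤ ENNReal.ofReal 1 := by
      refine (measure_mono hω).trans ?_
      rw [Real.volume_Icc]; simp
    rw [measureReal_def]
    exact ENNReal.toReal_le_of_le_ofReal zero_le_one this
  have hδS : δ ≤ S := by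
    rw [hδ, Real.sqrt_le_left hS0]
    have h1 := norm_setIntegral_le_of_norm_le_const (μ := volume) (s := ω) (f := fun x : ℝ => (φ (x, 0)) ^ 2)
      (C := S ^ 2) (by rw [hωv]; exact ENNReal.ofReal_lt_top) (by
        intro x hx
        have hx1 := hω hx
        have h2 := hS (x, 0) ⟨⟨by linarith [hx1.1], by linarith [hx1.2]⟩, by norm_num⟩
        rw [norm_pow, Real.norm_eq_abs]
        gcongr)
    refine (le_abs_self _).trans (h1.trans ?_)
    nlinarith [sq_nonneg S]
  -- translation to the unit cell
  let τ : ℝ → ℝ := fun x => x + ℓ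
  have hτ : MeasurePreserving τ volume volume := measurePreserving_add_right volume (ℓ : ℝ)
  have hτe : MeasurableEmbedding τ := measurableEmbedding_addRight (ℓ : ℝ)
  let φ' : ℝ × ℝ → ℝ := fun p => φ (p.1 + ℓ, p.2)
  have hφ' : ContDiff ℝ 2 φ' := hφ.comp (by fun_prop)
  have hintg : ∫ x in τ ⁻¹' ω, (φ' (x, 0)) ^ 2 = ∫ x in ω, (φ (x, 0)) ^ 2 :=
    hτ.setIntegral_preimage_emb hτe (fun x => (φ (x, 0)) ^ 2) ω
  have hpt := hcell (fun x => V (x + ℓ)) φ' S (τ ⁻¹' ω) (by fun_prop) (fun x => hV1 _) (fun x => hVM _) hφ'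
    (by
      intro x y
      have h1 := hpde (x + ℓ) y
      have e1 : deriv (fun s => φ' (s, y)) = fun s => deriv (fun s => φ (s, y)) (s + ℓ) := by
        funext s
        exact deriv_comp_add_const (fun s => φ (s, y)) (ℓ : ℝ) s
      rw [e1, deriv_comp_add_const]
      exact h1)
    (fun x => hneu (x + ℓ))
    (by
      intro x hx y hy
      exact hS (x + ℓ, y) ⟨⟨by linarith [hx.1], by linarith [hx.2]⟩, hy⟩)
    (hτ.measurable hωm)
    (by
      intro x hx
      have hx1 : x + ℓ ∈ Icc (ℓ : ℝ) ((ℓ : ℝ) + 1) := hω hx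
      exact ⟨by linarith [hx1.1], by linarith [hx1.2]⟩)
    (by rw [hτ.measure_preimage hωm.nullMeasurableSet, hωv])
  rw [hintg] at hpt
  have hb : ∀ z ∈ Icc (ℓ : ℝ) ((ℓ : ℝ) + 1) ×ˢ Icc (-(1/2) : ℝ) (1/2),
      |φ z| ≤ (K + 1) * C₀ * δ ^ α * S ^ (1 - α) := by
    rintro ⟨x, y⟩ ⟨hx, hy⟩
    have h1 := hopt (|φ (x, y)| / (K + 1)) S δ hδ0 hδS (by
      intro n
      have h2 := hpt (x - ℓ) ⟨by linarith [hx.1], by linarith [hx.2]⟩ y hy n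
      simp only [φ', sub_add_cancel] at h2
      rw [div_le_iff₀ (by positivity), mul_comm]
      refine h2.trans ?_
      gcongr
      linarith)
    rw [div_le_iff₀ (by positivity)] at h1
    linarith
  set X := (K + 1) * C₀ * δ ^ α * S ^ (1 - α) with hX
  have hX0 : 0 ≤ X := by positivity
  rw [Real.sqrt_le_left hX0]
  have hvD : (volume : Measure (ℝ × ℝ)) (Icc (ℓ : ℝ) ((ℓ : ℝ) + 1) ×ˢ Icc (-(1/2) : ℝ) (1/2)) = 1 := by
    rw [Measure.volume_eq_prod, Measure.prod_prod, Real.volume_Icc, Real.volume_Icc]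
    norm_num
  have h1 := norm_setIntegral_le_of_norm_le_const (μ := (volume : Measure (ℝ × ℝ)))
    (s := Icc (ℓ : ℝ) ((ℓ : ℝ) + 1) ×ˢ Icc (-(1/2) : ℝ) (1/2)) (f := fun z => (φ z) ^ 2)
    (C := X ^ 2) (by rw [hvD]; exact ENNReal.one_lt_top) (by
      intro z hz
      have := hb z hz
      rw [norm_pow, Real.norm_eq_abs]
      gcongr)
  refine (le_abs_self _).trans (h1.trans ?_)
  rw [measureReal_def, hvD]
  simp
end

section
/- Let 0 < ζ < 1. Then there exists a constant c > 0, depending only on ζ, such that for every measurable set ω ⊂ (0,1) with ζ ≤ |ω| ≤ 1 and every λ > 1, one has inf_{x₀ ∈ ℝ} ∫_ω cos²(λ(x − x₀)) dx ≥ c. -/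
open MeasureTheory Set

lemma aux_tendsto : Filter.Tendsto (fun n : ℕ => ∫ x in (0:ℝ)..Real.pi, Real.sin x ^ (2*n))
    Filter.atTop (nhds 0) := by
  have h := intervalIntegral.tendsto_integral_filter_of_dominated_convergence
    (μ := volume) (a := 0) (b := Real.pi) (l := Filter.atTop)
    (F := fun (n : ℕ) x => Real.sin x ^ (2*n)) (f := fun _ => (0:ℝ)) (fun _ => (1:ℝ))
    (Filter.Eventually.of_forall fun n => by
      apply Continuous.aestronglyMeasurable; fun_prop)
    (Filter.Eventually.of_forall fun n => Filter.Eventually.of_forall fun x _ => by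
      rw [norm_pow]
      exact pow_le_one₀ (norm_nonneg _) (Real.abs_sin_le_one x))
    (by simp)
    (by
      have h0 : ∀ᵐ x : ℝ, x ≠ Real.pi / 2 := by
        simp [ae_iff]
      filter_upwards [h0] with x hx hx2
      rw [uIoc_of_le Real.pi_pos.le] at hx2
      have hc : Real.cos x ≠ 0 := by
        intro hc
        apply hx
        apply Real.injOn_cos ⟨hx2.1.le, hx2.2⟩ ⟨by positivity, by linarith [Real.pi_pos]⟩
        simp [hc]
      have : Real.sin x ^ 2 < 1 := by
        have := Real.sin_sq_add_cos_sq x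
        have : 0 < Real.cos x ^ 2 := by positivity
        linarith
      simp_rw [pow_mul]
      exact tendsto_pow_atTop_nhds_zero_of_lt_one (sq_nonneg _) this)
  simpa using h

lemma aux_bound (n : ℕ) (lam : ℝ) (hl : 1 < lam) (x₀ : ℝ) :
    ∫ x in (0:ℝ)..1, Real.sin (lam * (x - x₀)) ^ (2*n)
      ≤ 2 * ∫ x in (0:ℝ)..Real.pi, Real.sin x ^ (2*n) := by
  set I := ∫ x in (0:ℝ)..Real.pi, Real.sin x ^ (2*n) with hI
  have hper : Function.Periodic (fun x => Real.sin x ^ (2*n)) Real.pi := by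
    intro x; simp [pow_mul, Real.sin_add_pi]
  have hnn : ∀ x, 0 ≤ Real.sin x ^ (2*n) := fun x => by rw [pow_mul]; positivity
  have hI0 : 0 ≤ I := intervalIntegral.integral_nonneg Real.pi_pos.le fun x _ => hnn x
  have hint : ∀ a b, IntervalIntegrable (fun x => Real.sin x ^ (2*n)) volume a b :=
    fun a b => Continuous.intervalIntegrable (by fun_prop) a b
  have e1 : ∫ x in (0:ℝ)..1, Real.sin (lam * (x - x₀)) ^ (2*n)
      = lam⁻¹ * ∫ x in (-(lam*x₀))..(-(lam*x₀) + lam), Real.sin x ^ (2*n) := by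
    have := intervalIntegral.integral_comp_mul_sub (a := 0) (b := 1)
      (fun x => Real.sin x ^ (2*n)) (c := lam) (by positivity) (lam*x₀)
    simp only [mul_sub]
    rw [this]
    simp only [smul_eq_mul]
    congr 2 <;> ring
  obtain ⟨N, hN⟩ : ∃ N : ℕ, N = ⌈lam / Real.pi⌉₊ := ⟨_, rfl⟩
  have hN1 : lam ≤ N * Real.pi := by
    have := Nat.le_ceil (lam / Real.pi)
    rw [← hN] at this
    rwa [div_le_iff₀ Real.pi_pos] at this
  have hN2 : (N:ℝ) ≤ 2 * lam := by
    have h := Nat.ceil_lt_add_one (a := lam / Real.pi) (by positivity)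
    rw [← hN] at h
    have : lam / Real.pi ≤ lam := div_le_self (by linarith) (by linarith [Real.pi_gt_three])
    linarith
  set t := -(lam*x₀)
  have e2 : ∫ x in t..(t + N * Real.pi), Real.sin x ^ (2*n) = N * I := by
    have := hper.intervalIntegral_add_zsmul_eq N t hint
    have h2 := hper.intervalIntegral_add_eq t 0
    simp at this h2
    rw [this, h2]
  have e3 : ∫ x in t..(t + lam), Real.sin x ^ (2*n) ≤
      ∫ x in t..(t + N * Real.pi), Real.sin x ^ (2*n) := by
    apply intervalIntegral.integral_mono_interval le_rfl (by linarith) (by linarith)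
      (Filter.Eventually.of_forall hnn) (hint _ _)
  rw [e1, inv_mul_le_iff₀ (by linarith)]
  nlinarith



/-- **A quantitative lower bound for averages of `cos²` over measurable sets.**
For `0 < ζ < 1` there is `c > 0`, depending only on `ζ`, such that for every
measurable `ω ⊆ (0,1)` with `ζ ≤ |ω| ≤ 1` and every `λ > 1`,
`inf_{x₀ ∈ ℝ} ∫_ω cos²(λ(x - x₀)) dx ≥ c`. -/
theorem cos_sq_average_lower_bound
    (ζ : ℝ) (hζ0 : 0 < ζ) (hζ1 : ζ < 1) :
    ∃ c > 0, ∀ ω : Set ℝ, MeasurableSet ω → ω ⊆ Ioo (0 : ℝ) 1 →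
      ENNReal.ofReal ζ ≤ volume ω → volume ω ≤ 1 →
      ∀ lam : ℝ, 1 < lam → ∀ x₀ : ℝ,
        c ≤ ∫ x in ω, Real.cos (lam * (x - x₀)) ^ 2 := by
  obtain ⟨n, hn, hn1⟩ := ((aux_tendsto.eventually (gt_mem_nhds
    (show (0:ℝ) < ζ / 4 by positivity))).and (Filter.eventually_ge_atTop 1)).exists
  have hnpos : (0:ℝ) < n := by exact_mod_cast hn1
  refine ⟨ζ / 2 / n, by positivity, ?_⟩
  intro ω hω hsub hv hv1 lam hl x₀
  have hfin : volume ω ≠ ⊤ := ne_top_of_le_ne_top ENNReal.one_ne_top hv1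
  have hreal : ζ ≤ volume.real ω := (ENNReal.ofReal_le_iff_le_toReal hfin).1 hv
  have hic : ∀ f : ℝ → ℝ, Continuous f → IntegrableOn f (Ioc 0 1) := fun f hf =>
    (hf.integrableOn_Icc (a := 0) (b := 1)).mono_set Ioc_subset_Icc_self
  have hsub' : ω ⊆ Ioc (0:ℝ) 1 := hsub.trans Ioo_subset_Ioc_self
  have h1 : ∫ x in ω, Real.sin (lam * (x - x₀)) ^ (2*n) ≤ ζ / 2 := by
    have hb := aux_bound n lam hl x₀
    rw [intervalIntegral.integral_of_le zero_le_one] at hb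
    have hm : ∫ x in ω, Real.sin (lam * (x - x₀)) ^ (2*n) ≤
        ∫ x in Ioc (0:ℝ) 1, Real.sin (lam * (x - x₀)) ^ (2*n) :=
      setIntegral_mono_set (hic _ (by fun_prop))
        (Filter.Eventually.of_forall fun x => by
          simp only [pow_mul, Pi.zero_apply]; positivity)
        hsub'.eventuallyLE
    linarith
  have hsin : IntegrableOn (fun x => Real.sin (lam * (x - x₀)) ^ (2*n)) ω :=
    (hic _ (by fun_prop)).mono_set hsub'
  have hcos : IntegrableOn (fun x => Real.cos (lam * (x - x₀)) ^ 2) ω :=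
    (hic _ (by fun_prop)).mono_set hsub'
  have hone : IntegrableOn (fun _ : ℝ => (1:ℝ)) ω :=
    (hic _ (by fun_prop)).mono_set hsub'
  have h2 : ∫ x in ω, (1 - Real.sin (lam * (x - x₀)) ^ (2*n)) ≤
      ∫ x in ω, n * Real.cos (lam * (x - x₀)) ^ 2 := by
    apply integral_mono (hone.sub hsin) (hcos.const_mul _)
    intro x
    have hb := one_add_mul_le_pow (a := -Real.cos (lam * (x - x₀)) ^ 2)
      (by linarith [Real.cos_sq_le_one (lam * (x - x₀))]) n
    have he : 1 + -Real.cos (lam * (x - x₀)) ^ 2 = Real.sin (lam * (x - x₀)) ^ 2 := by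
      rw [Real.sin_sq]; ring
    rw [he, ← pow_mul] at hb
    show 1 - Real.sin (lam * (x - x₀)) ^ (2*n) ≤ n * Real.cos (lam * (x - x₀)) ^ 2
    linarith
  rw [integral_sub hone hsin, integral_const_mul] at h2
  simp only [integral_const, smul_eq_mul, mul_one, measureReal_restrict_apply_univ] at h2
  rw [div_le_iff₀ hnpos]
  linarith
end
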